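/- arXiv:math/9812080 — 6 statements merged into one kernel-verified Lean document; each statement's English description precedes it below -/
import Mathlib

section
/- Let n≥1 and let η=(η_1,…,η_n)∈ℕ^n be a composition, and let Φη := (η_2,…,η_n,η_1+1). Then, as identities of polynomials in ℤ[q,t]: d_{Φη}(q,t) = (1 − q^{η_1+1} t^{n−l'_η(1)})·d_η(q,t) and e_{Φη}(q,t) = (1 − q^{η_1+1} t^{n−l'_η(1)})·e_η(q,t), where l'_η(1) = #{k>1 : η_k>η_1}. -/
/- STATEMENT 0: For a composition η ∈ ℕ^n and Φη := (η_2,…,η_n,η_1+1), in ℤ[q,t]: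
   d_{Φη} = (1 − q^{η_1+1} t^{n−l'_η(1)})·d_η  and  e_{Φη} = (1 − q^{η_1+1} t^{n−l'_η(1)})·e_η. -/

open Finset

namespace Stmt0

variable {R : Type*} [CommRing R]

/-- leg colength l'_η(i) -/
def legCo (n : ℕ) (η : Fin n → ℕ) (i : Fin n) : ℕ :=
  (univ.filter fun k => k < i ∧ η i ≤ η k).card +
  (univ.filter fun k => i < k ∧ η i < η k).card

/-- leg length l(s) of the node s = (i,j) -/
def leg (n : ℕ) (η : Fin n → ℕ) (i : Fin n) (j : ℕ) : ℕ :=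
  (univ.filter fun k => i < k ∧ j ≤ η k ∧ η k ≤ η i).card +
  (univ.filter fun k => k < i ∧ j ≤ η k + 1 ∧ η k + 1 ≤ η i).card

/-- d_η(q,t) = ∏_s (1 − q^{a(s)+1} t^{l(s)+1}) -/
def dP (n : ℕ) (η : Fin n → ℕ) (q t : R) : R :=
  ∏ i : Fin n, ∏ j ∈ Finset.Icc 1 (η i), (1 - q ^ (η i - j + 1) * t ^ (leg n η i j + 1))

/-- e_η(q,t) = ∏_s (1 − q^{a'(s)+1} t^{n−l'(s)}) -/
def eP (n : ℕ) (η : Fin n → ℕ) (q t : R) : R :=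
  ∏ i : Fin n, ∏ j ∈ Finset.Icc 1 (η i), (1 - q ^ ((j - 1) + 1) * t ^ (n - legCo n η i))

/-- Φη := (η_2,…,η_n,η_1+1) -/
def Phi (n : ℕ) (η : Fin n → ℕ) : Fin n → ℕ :=
  fun k => if h : (k : ℕ) + 1 < n then η ⟨(k : ℕ) + 1, h⟩ else η ⟨0, k.pos⟩ + 1

end Stmt0

open Stmt0 MvPolynomial

theorem phi_castSucc (m : ℕ) (η : Fin (m+1) → ℕ) (i : Fin m) :
    Phi (m+1) η i.castSucc = η i.succ := by
  simp [Phi, Fin.succ]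

theorem phi_last (m : ℕ) (η : Fin (m+1) → ℕ) :
    Phi (m+1) η (Fin.last m) = η 0 + 1 := by
  simp [Phi]

theorem not_last_lt (m : ℕ) (i : Fin m) : ¬ Fin.last m < i.castSucc := by
  simp [Fin.lt_def]

theorem leg_castSucc (m : ℕ) (η : Fin (m+1) → ℕ) (i : Fin m) (j : ℕ) :
    leg (m+1) (Phi (m+1) η) i.castSucc j = leg (m+1) η i.succ j := by
  simp only [leg, Finset.card_filter]
  rw [Fin.sum_univ_castSucc, Fin.sum_univ_castSucc, Fin.sum_univ_succ, Fin.sum_univ_succ]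
  simp only [phi_castSucc, phi_last, Fin.castSucc_lt_castSucc_iff, Fin.succ_lt_succ_iff,
    Fin.castSucc_lt_last, Fin.succ_pos, Fin.not_lt_zero, not_last_lt, false_and, true_and, if_false]
  omega

theorem leg_last (m : ℕ) (η : Fin (m+1) → ℕ) (j : ℕ) :
    leg (m+1) (Phi (m+1) η) (Fin.last m) (j+1) = leg (m+1) η 0 j := by
  simp only [leg, Finset.card_filter]
  rw [Fin.sum_univ_castSucc, Fin.sum_univ_castSucc, Fin.sum_univ_succ, Fin.sum_univ_succ]
  simp [phi_castSucc, phi_last, not_last_lt]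

theorem legCo_castSucc (m : ℕ) (η : Fin (m+1) → ℕ) (i : Fin m) :
    legCo (m+1) (Phi (m+1) η) i.castSucc = legCo (m+1) η i.succ := by
  simp only [legCo, Finset.card_filter]
  rw [Fin.sum_univ_castSucc, Fin.sum_univ_castSucc, Fin.sum_univ_succ, Fin.sum_univ_succ]
  simp only [phi_castSucc, phi_last, Fin.castSucc_lt_castSucc_iff, Fin.succ_lt_succ_iff,
    Fin.castSucc_lt_last, Fin.succ_pos, Fin.not_lt_zero, not_last_lt, false_and, true_and, if_false,
    Nat.lt_succ_iff]
  omega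

theorem legCo_last (m : ℕ) (η : Fin (m+1) → ℕ) :
    legCo (m+1) (Phi (m+1) η) (Fin.last m) = legCo (m+1) η 0 := by
  simp only [legCo, Finset.card_filter]
  rw [Fin.sum_univ_castSucc, Fin.sum_univ_castSucc, Fin.sum_univ_succ, Fin.sum_univ_succ]
  simp [phi_castSucc, phi_last, not_last_lt]

theorem legCo_zero (m : ℕ) (η : Fin (m+1) → ℕ) :
    legCo (m+1) η 0 = (univ.filter fun k : Fin (m+1) => 0 < k ∧ η 0 < η k).card := by
  simp [legCo]

theorem leg_zero (m : ℕ) (η : Fin (m+1) → ℕ) :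
    leg (m+1) η 0 0 + 1 =
      m + 1 - (univ.filter fun k : Fin (m+1) => 0 < k ∧ η 0 < η k).card := by
  have h : leg (m+1) η 0 0 +
      (univ.filter fun k : Fin (m+1) => 0 < k ∧ η 0 < η k).card = m := by
    simp only [leg, Finset.card_filter]
    rw [Fin.sum_univ_succ, Fin.sum_univ_succ, Fin.sum_univ_succ]
    simp only [Fin.succ_pos, Fin.not_lt_zero, false_and, true_and, if_false, zero_add,
      Finset.sum_const_zero, add_zero, Nat.zero_le]
    rw [← Finset.sum_add_distrib]
    rw [Finset.sum_congr rfl (g := fun _ => 1)]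
    · simp
    · intro k _
      split_ifs <;> omega
  omega

theorem prod_Icc_shift {R : Type*} [CommRing R] (f : ℕ → R) (N : ℕ) :
    ∏ j ∈ Finset.Icc 1 (N+1), f j = f 1 * ∏ j ∈ Finset.Icc 1 N, f (j+1) := by
  induction N with
  | zero => simp
  | succ N ih =>
    rw [Finset.prod_Icc_succ_top (by omega), ih, Finset.prod_Icc_succ_top (by omega), mul_assoc]

theorem dP_phi {R : Type*} [CommRing R] (m : ℕ) (η : Fin (m+1) → ℕ) (q t : R) :
    dP (m+1) (Phi (m+1) η) q t =
      (1 - q ^ (η 0 + 1) * t ^ (leg (m+1) η 0 0 + 1)) * dP (m+1) η q t := by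
  unfold dP
  rw [Fin.prod_univ_castSucc, Fin.prod_univ_succ]
  simp only [phi_castSucc, phi_last, leg_castSucc]
  rw [mul_comm, ← mul_assoc, prod_Icc_shift]
  have h := leg_last m η 0
  simp only [zero_add] at h
  simp only [leg_last, Nat.add_sub_add_right, h, Nat.add_sub_cancel]

theorem eP_phi {R : Type*} [CommRing R] (m : ℕ) (η : Fin (m+1) → ℕ) (q t : R) :
    eP (m+1) (Phi (m+1) η) q t =
      (1 - q ^ (η 0 + 1) * t ^ (m + 1 - legCo (m+1) η 0)) * eP (m+1) η q t := by
  unfold eP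
  rw [Fin.prod_univ_castSucc, Fin.prod_univ_succ]
  simp only [phi_castSucc, phi_last, legCo_castSucc, legCo_last]
  rw [Finset.prod_Icc_succ_top (by omega), Nat.add_sub_cancel]
  ring

theorem stmt_0 (n : ℕ) (hn : 1 ≤ n) (η : Fin n → ℕ) :
    dP n (Phi n η) (X 0 : MvPolynomial (Fin 2) ℤ) (X 1)
      = (1 - (X 0 : MvPolynomial (Fin 2) ℤ) ^ (η ⟨0, hn⟩ + 1)
            * (X 1) ^ (n - (univ.filter fun k : Fin n => ⟨0, hn⟩ < k ∧ η ⟨0, hn⟩ < η k).card))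
        * dP n η (X 0) (X 1) ∧
    eP n (Phi n η) (X 0 : MvPolynomial (Fin 2) ℤ) (X 1)
      = (1 - (X 0 : MvPolynomial (Fin 2) ℤ) ^ (η ⟨0, hn⟩ + 1)
            * (X 1) ^ (n - (univ.filter fun k : Fin n => ⟨0, hn⟩ < k ∧ η ⟨0, hn⟩ < η k).card))
        * eP n η (X 0) (X 1) := by
  obtain ⟨m, rfl⟩ : ∃ m, n = m + 1 := ⟨n - 1, by omega⟩
  have h0 : (⟨0, hn⟩ : Fin (m+1)) = 0 := rfl
  rw [h0]
  constructor
  · rw [← leg_zero]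
    exact dP_phi m η _ _
  · rw [← legCo_zero]
    exact eP_phi m η _ _
end

section
/- Let n≥1 and let η=(η_1,…,η_n)∈ℕ^n be a composition, and let Φη := (η_2,…,η_n,η_1+1). Then l(Φη) = l(η) + #{k : 2≤k≤n, η_k≤η_1} and l'(Φη) = l'(η) + (n−1) − #{k : 2≤k≤n, η_k≤η_1}. -/
/- STATEMENT 2: For η ∈ ℕ^n and Φη := (η_2,…,η_n,η_1+1):
   l(Φη) = l(η) + #{k : 2≤k≤n, η_k≤η_1}  and
   l'(Φη) = l'(η) + (n−1) − #{k : 2≤k≤n, η_k≤η_1}. -/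

open Finset

namespace Stmt2

/-- leg colength l'_η(i) -/
def legCo (n : ℕ) (η : Fin n → ℕ) (i : Fin n) : ℕ :=
  (univ.filter fun k => k < i ∧ η i ≤ η k).card +
  (univ.filter fun k => i < k ∧ η i < η k).card

/-- leg length l(s) of the node s = (i,j) -/
def leg (n : ℕ) (η : Fin n → ℕ) (i : Fin n) (j : ℕ) : ℕ :=
  (univ.filter fun k => i < k ∧ j ≤ η k ∧ η k ≤ η i).card +
  (univ.filter fun k => k < i ∧ j ≤ η k + 1 ∧ η k + 1 ≤ η i).card

/-- l(η) = Σ_s l(s) -/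
def lTot (n : ℕ) (η : Fin n → ℕ) : ℕ :=
  ∑ i : Fin n, ∑ j ∈ Finset.Icc 1 (η i), leg n η i j

/-- l'(η) = Σ_s l'(s) -/
def lcoTot (n : ℕ) (η : Fin n → ℕ) : ℕ :=
  ∑ i : Fin n, ∑ j ∈ Finset.Icc 1 (η i), legCo n η i

/-- Φη := (η_2,…,η_n,η_1+1) -/
def Phi (n : ℕ) (η : Fin n → ℕ) : Fin n → ℕ :=
  fun k => if h : (k : ℕ) + 1 < n then η ⟨(k : ℕ) + 1, h⟩ else η ⟨0, k.pos⟩ + 1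

end Stmt2

open Stmt2

namespace Stmt2

/-- pair sum -/
def pairSum (F G : ℕ → ℕ → ℕ) (n : ℕ) (η : Fin n → ℕ) : ℕ :=
  ∑ i : Fin n, ((∑ k : Fin n, if i < k then F (η i) (η k) else 0)
    + ∑ k : Fin n, if k < i then G (η i) (η k) else 0)

lemma Phi_castSucc (m : ℕ) (η : Fin (m + 1) → ℕ) (k : Fin m) :
    Phi (m + 1) η k.castSucc = η k.succ := by
  have h : (k : ℕ) + 1 < m + 1 := by omega
  simp only [Phi, Fin.val_castSucc, dif_pos h]
  rfl

lemma Phi_last (m : ℕ) (η : Fin (m + 1) → ℕ) :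
    Phi (m + 1) η (Fin.last m) = η 0 + 1 := by
  simp [Phi]

lemma pairSum_Phi (F G e : ℕ → ℕ → ℕ) (h1 : ∀ a b, F b (a + 1) = G b a)
    (h2 : ∀ a b, G (a + 1) b = F a b + e a b) (m : ℕ) (η : Fin (m + 1) → ℕ) :
    pairSum F G (m + 1) (Phi (m + 1) η)
      = pairSum F G (m + 1) η + ∑ k : Fin m, e (η 0) (η k.succ) := by
  have hL := Eq.refl (pairSum F G (m + 1) (Phi (m + 1) η))
  have hR := Eq.refl (pairSum F G (m + 1) η)
  conv_rhs at hL =>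
    unfold pairSum
    simp only [Fin.sum_univ_castSucc, Phi_castSucc, Phi_last]
  conv_rhs at hR =>
    unfold pairSum
    simp only [Fin.sum_univ_succ]
  rw [hL, hR]
  simp only [Fin.castSucc_lt_castSucc_iff, Fin.succ_lt_succ_iff, Fin.castSucc_lt_last,
    Fin.succ_pos, lt_irrefl, Fin.not_lt_zero, if_true, if_false, h1, h2,
    not_lt_of_gt (Fin.castSucc_lt_last _), not_lt_of_gt (Fin.succ_pos _), sum_add_distrib,
    sum_const_zero]
  ring

lemma lTot_eq (n : ℕ) (η : Fin n → ℕ) :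
    lTot n η = pairSum (fun x y => if y ≤ x then y else 0)
      (fun x y => if y + 1 ≤ x then y + 1 else 0) n η := by
  have key : ∀ x y : ℕ, (∑ j ∈ Icc 1 x, if j ≤ y ∧ y ≤ x then 1 else 0)
      = if y ≤ x then y else 0 := by
    intro x y
    rw [← card_filter]
    split_ifs with h
    · have : (Icc 1 x).filter (fun j => j ≤ y ∧ y ≤ x) = Icc 1 y := by
        ext j; simp only [mem_filter, mem_Icc]; omega
      rw [this]; simp
    · simp [h]
  unfold lTot pairSum leg
  refine sum_congr rfl fun i _ => ?_
  simp only [card_filter]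
  rw [sum_add_distrib]
  congr 1
  · rw [sum_comm]
    refine sum_congr rfl fun k _ => ?_
    by_cases h : i < k
    · simp only [h, true_and, if_true, key]
    · simp [h]
  · rw [sum_comm]
    refine sum_congr rfl fun k _ => ?_
    by_cases h : k < i
    · simp only [h, true_and, if_true, key]
    · simp [h]

lemma lcoTot_eq (n : ℕ) (η : Fin n → ℕ) :
    lcoTot n η = pairSum (fun x y => if x < y then x else 0)
      (fun x y => if x ≤ y then x else 0) n η := by
  unfold lcoTot pairSum legCo
  refine sum_congr rfl fun i _ => ?_
  simp only [card_filter, sum_const, Nat.card_Icc, smul_eq_mul, Nat.add_sub_cancel]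
  rw [mul_add, add_comm, mul_sum, mul_sum]
  congr 1 <;> refine sum_congr rfl fun k _ => ?_
  · by_cases h : i < k <;> simp [h]
  · by_cases h : k < i <;> simp [h]

end Stmt2

theorem stmt_2 (n : ℕ) (hn : 1 ≤ n) (η : Fin n → ℕ) :
    lTot n (Phi n η) = lTot n η
        + (univ.filter fun k : Fin n => ⟨0, hn⟩ < k ∧ η k ≤ η ⟨0, hn⟩).card ∧
    lcoTot n (Phi n η) = lcoTot n η
        + (n - 1 - (univ.filter fun k : Fin n => ⟨0, hn⟩ < k ∧ η k ≤ η ⟨0, hn⟩).card) := by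
  obtain ⟨m, rfl⟩ : ∃ m, n = m + 1 := ⟨n - 1, by omega⟩
  have hz : (⟨0, hn⟩ : Fin (m + 1)) = 0 := rfl
  have hc : (univ.filter fun k : Fin (m + 1) => (0 : Fin (m + 1)) < k ∧ η k ≤ η 0).card
      = ∑ k : Fin m, if η k.succ ≤ η 0 then 1 else 0 := by
    rw [card_filter, Fin.sum_univ_succ]
    simp [Fin.succ_pos]
  rw [hz, hc]
  constructor
  · rw [lTot_eq, lTot_eq]
    apply pairSum_Phi _ _ (fun a b => if b ≤ a then 1 else 0)
    · intro a b; rfl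
    · intro a b
      split_ifs <;> omega
  · rw [lcoTot_eq, lcoTot_eq, pairSum_Phi _ _ (fun a b => if b ≤ a then 0 else 1)]
    · congr 1
      have : (∑ k : Fin m, if η k.succ ≤ η 0 then 0 else 1)
          + (∑ k : Fin m, if η k.succ ≤ η 0 then 1 else 0) = m := by
        rw [← sum_add_distrib]
        have : ∀ k : Fin m, ((if η k.succ ≤ η 0 then 0 else 1)
          + (if η k.succ ≤ η 0 then 1 else 0)) = 1 := by
          intro k; split_ifs <;> rfl
        simp [this]
      omega
    · intro a b
      split_ifs <;> omega
    · intro a b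
      split_ifs <;> omega
end

section
/- Let n≥1, 1≤i≤n−1, and let η∈ℕ^n be a composition with η_i>η_{i+1}. Let s_iη be the composition obtained from η by exchanging entries i and i+1, and set δ := q^{η_i−η_{i+1}}·t^{l'_η(i+1)−l'_η(i)} ∈ ℚ(q,t). Then d_{s_iη}(q,t)·(1−δ) = d_η(q,t)·(1−t·δ) and d'_{s_iη}(q,t)·(1−t^{−1}·δ) = d'_η(q,t)·(1−δ), as identities in the field ℚ(q,t). -/
/- STATEMENT 3: For η ∈ ℕ^n with η_i > η_{i+1}, s_iη the swap of entries i, i+1, and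
   δ := q^{η_i−η_{i+1}}·t^{l'_η(i+1)−l'_η(i)} ∈ ℚ(q,t):
   d_{s_iη}·(1−δ) = d_η·(1−t·δ)  and  d'_{s_iη}·(1−t⁻¹·δ) = d'_η·(1−δ). -/

open Finset

namespace Stmt3

variable {R : Type*} [CommRing R]

/-- leg colength l'_η(i) -/
def legCo (n : ℕ) (η : Fin n → ℕ) (i : Fin n) : ℕ :=
  (univ.filter fun k => k < i ∧ η i ≤ η k).card +
  (univ.filter fun k => i < k ∧ η i < η k).card

/-- leg length l(s) of the node s = (i,j) -/
def leg (n : ℕ) (η : Fin n → ℕ) (i : Fin n) (j : ℕ) : ℕ :=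
  (univ.filter fun k => i < k ∧ j ≤ η k ∧ η k ≤ η i).card +
  (univ.filter fun k => k < i ∧ j ≤ η k + 1 ∧ η k + 1 ≤ η i).card

/-- d_η(q,t) = ∏_s (1 − q^{a(s)+1} t^{l(s)+1}) -/
def dP (n : ℕ) (η : Fin n → ℕ) (q t : R) : R :=
  ∏ i : Fin n, ∏ j ∈ Finset.Icc 1 (η i), (1 - q ^ (η i - j + 1) * t ^ (leg n η i j + 1))

/-- d'_η(q,t) = ∏_s (1 − q^{a(s)+1} t^{l(s)}) -/
def dP' (n : ℕ) (η : Fin n → ℕ) (q t : R) : R :=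
  ∏ i : Fin n, ∏ j ∈ Finset.Icc 1 (η i), (1 - q ^ (η i - j + 1) * t ^ (leg n η i j))

/-- The field K = ℚ(q,t). -/
abbrev K : Type := FractionRing (MvPolynomial (Fin 2) ℚ)

noncomputable def q : K := algebraMap (MvPolynomial (Fin 2) ℚ) K (MvPolynomial.X 0)
noncomputable def t : K := algebraMap (MvPolynomial (Fin 2) ℚ) K (MvPolynomial.X 1)

end Stmt3

open Stmt3

namespace Stmt3Aux

lemma leg_sum (n : ℕ) (η : Fin n → ℕ) (i : Fin n) (j : ℕ) : leg n η i j =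
    ∑ k : Fin n, ((if i < k ∧ j ≤ η k ∧ η k ≤ η i then 1 else 0) +
      (if k < i ∧ j ≤ η k + 1 ∧ η k + 1 ≤ η i then 1 else 0)) := by
  rw [Finset.sum_add_distrib, leg, Finset.card_filter, Finset.card_filter]

lemma legCo_sum (n : ℕ) (η : Fin n → ℕ) (i : Fin n) : legCo n η i =
    ∑ k : Fin n, ((if k < i ∧ η i ≤ η k then 1 else 0) +
      (if i < k ∧ η i < η k then 1 else 0)) := by
  rw [Finset.sum_add_distrib, legCo, Finset.card_filter, Finset.card_filter]

lemma legCo_diff (n : ℕ) (η : Fin n → ℕ) (x y : Fin n) (hxy : (y : ℕ) = x + 1)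
    (hlt : η y < η x) : legCo n η y = legCo n η x + (leg n η x (η y + 1) + 1) := by
  have h1 : leg n η x (η y + 1) + 1 =
      leg n η x (η y + 1) + ∑ k : Fin n, if k = x then 1 else 0 := by simp
  rw [h1, legCo_sum, legCo_sum, leg_sum, ← Finset.sum_add_distrib, ← Finset.sum_add_distrib]
  refine Finset.sum_congr rfl fun k _ => ?_
  by_cases hkx : k = x
  · subst hkx
    have : k < y := by rw [Fin.lt_def]; omega
    have h2 : ¬ y < k := by rw [Fin.lt_def]; omega
    simp [this, h2, hlt.le]
  by_cases hky : k = y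
  · subst hky
    have h2 : ¬ k < x := by rw [Fin.lt_def]; omega
    simp [h2, hkx]; omega
  have e1 : (k : ℕ) ≠ x := fun h => hkx (Fin.ext h)
  have e2 : (k : ℕ) ≠ y := fun h => hky (Fin.ext h)
  simp only [Fin.lt_def, hkx, if_false]
  split_ifs <;> omega

lemma leg_swap (n : ℕ) (η : Fin n → ℕ) (x y : Fin n) (hxy : (y : ℕ) = x + 1)
    (hlt : η y < η x) (m : Fin n) (j : ℕ) :
    leg n (η ∘ Equiv.swap x y) (Equiv.swap x y m) j =
      leg n η m j + if m = x ∧ j = η y + 1 then 1 else 0 := by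
  have h1 : (if m = x ∧ j = η y + 1 then 1 else 0) =
      ∑ k : Fin n, if k = y then (if m = x ∧ j = η y + 1 then 1 else 0) else 0 := by simp
  rw [leg_sum, leg_sum, h1, ← Finset.sum_add_distrib, ← Equiv.sum_comp (Equiv.swap x y)]
  refine Finset.sum_congr rfl fun k _ => ?_
  simp only [Function.comp_apply, Equiv.swap_apply_self, Fin.lt_def]
  have hne : x ≠ y := fun h => by rw [h] at hxy; omega
  have key : ∀ z : Fin n, (z = x ∧ Equiv.swap x y z = y) ∨ (z = y ∧ Equiv.swap x y z = x) ∨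
      ((z : ℕ) ≠ x ∧ (z : ℕ) ≠ y ∧ Equiv.swap x y z = z) := by
    intro z
    by_cases h : z = x
    · left; subst h; simp
    by_cases h' : z = y
    · right; left; subst h'; simp
    exact Or.inr (Or.inr ⟨fun e => h (Fin.ext e), fun e => h' (Fin.ext e),
      Equiv.swap_apply_of_ne_of_ne h h'⟩)
  simp only [Fin.ext_iff (a := k), Fin.ext_iff (a := m)]
  rcases key m with ⟨hm, em⟩ | ⟨hm, em⟩ | ⟨hm, hm', em⟩ <;>
  rcases key k with ⟨hk, ek⟩ | ⟨hk, ek⟩ | ⟨hk, hk', ek⟩ <;>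
  rw [em, ek] <;> (try subst hm) <;> (try subst hk) <;> split_ifs <;> omega

lemma main {R : Type*} [CommRing R] (n : ℕ) (η : Fin n → ℕ) (x y : Fin n)
    (hxy : (y : ℕ) = x + 1) (hlt : η y < η x) (g : ℕ → ℕ → R) :
    (∏ i : Fin n, ∏ j ∈ Finset.Icc 1 ((η ∘ Equiv.swap x y) i),
      g ((η ∘ Equiv.swap x y) i - j + 1) (leg n (η ∘ Equiv.swap x y) i j)) *
        g (η x - η y) (leg n η x (η y + 1)) =
    (∏ i : Fin n, ∏ j ∈ Finset.Icc 1 (η i), g (η i - j + 1) (leg n η i j)) *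
        g (η x - η y) (leg n η x (η y + 1) + 1) := by
  rw [← Equiv.prod_comp (Equiv.swap x y)]
  simp only [leg_swap n η x y hxy hlt]
  simp only [Function.comp_apply, Equiv.swap_apply_self]
  rw [← Finset.mul_prod_erase Finset.univ _ (Finset.mem_univ x),
    ← Finset.mul_prod_erase Finset.univ (fun i => ∏ j ∈ Finset.Icc 1 (η i), _)
      (Finset.mem_univ x)]
  have hmem : η y + 1 ∈ Finset.Icc 1 (η x) := by simp; omega
  rw [← Finset.mul_prod_erase _ _ hmem,
    ← Finset.mul_prod_erase _ (fun j => g (η x - j + 1) (leg n η x j)) hmem]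
  have e1 : ∀ m ∈ Finset.univ.erase x, (∏ j ∈ Finset.Icc 1 (η m),
      g (η m - j + 1) (leg n η m j + if m = x ∧ j = η y + 1 then 1 else 0)) =
      ∏ j ∈ Finset.Icc 1 (η m), g (η m - j + 1) (leg n η m j) := by
    intro m hm
    simp [Finset.ne_of_mem_erase hm]
  have e2 : ∀ j ∈ (Finset.Icc 1 (η x)).erase (η y + 1),
      g (η x - j + 1) (leg n η x j + if x = x ∧ j = η y + 1 then 1 else 0) =
      g (η x - j + 1) (leg n η x j) := by
    intro j hj
    simp [Finset.ne_of_mem_erase hj]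
  rw [Finset.prod_congr rfl e1, Finset.prod_congr rfl e2]
  have e3 : η x - (η y + 1) + 1 = η x - η y := by omega
  simp only [e3, and_self, if_true]
  ring

lemma t_ne : t ≠ 0 := by
  unfold t
  intro h
  have := (IsFractionRing.to_map_eq_zero_iff (K := K)).1 h
  exact MvPolynomial.X_ne_zero _ this

end Stmt3Aux

theorem stmt_3 (n : ℕ) (i : ℕ) (η : Fin n → ℕ)
    (hii : i + 1 < n)
    (hlt : η ⟨i + 1, hii⟩ < η ⟨i, Nat.lt_of_succ_lt hii⟩)
    (siη : Fin n → ℕ)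
    (hsi : siη = η ∘ Equiv.swap (⟨i, Nat.lt_of_succ_lt hii⟩ : Fin n) ⟨i + 1, hii⟩)
    (δ : K)
    (hδ : δ = q ^ (η ⟨i, Nat.lt_of_succ_lt hii⟩ - η ⟨i + 1, hii⟩)
      * t ^ ((legCo n η ⟨i + 1, hii⟩ : ℤ) - (legCo n η ⟨i, Nat.lt_of_succ_lt hii⟩ : ℤ))) :
    dP n siη q t * (1 - δ) = dP n η q t * (1 - t * δ) ∧
    dP' n siη q t * (1 - t⁻¹ * δ) = dP' n η q t * (1 - δ) := by
  subst hsi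
  have hL := Stmt3Aux.legCo_diff n η ⟨i, Nat.lt_of_succ_lt hii⟩ ⟨i + 1, hii⟩ rfl hlt
  have ht := Stmt3Aux.t_ne
  have m1 := Stmt3Aux.main n η ⟨i, Nat.lt_of_succ_lt hii⟩ ⟨i + 1, hii⟩ rfl hlt
    (fun a l => 1 - q ^ a * t ^ (l + 1))
  have m2 := Stmt3Aux.main n η ⟨i, Nat.lt_of_succ_lt hii⟩ ⟨i + 1, hii⟩ rfl hlt
    (fun a l => 1 - q ^ a * t ^ l)
  rw [hL] at hδ
  generalize leg n η ⟨i, Nat.lt_of_succ_lt hii⟩ (η ⟨i + 1, hii⟩ + 1) = L at *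
  generalize η ⟨i, Nat.lt_of_succ_lt hii⟩ - η ⟨i + 1, hii⟩ = A at *
  have hδ' : δ = q ^ A * t ^ (L + 1) := by
    rw [hδ, ← zpow_natCast t (L + 1)]
    congr 2
    push_cast
    ring
  have h1 : t * δ = q ^ A * t ^ (L + 1 + 1) := by rw [hδ']; ring
  have h2 : t⁻¹ * δ = q ^ A * t ^ L := by
    rw [hδ', pow_succ]; field_simp
  rw [h1, h2, hδ']
  exact ⟨m1, m2⟩
end

section
/- Let n≥1, 1≤i≤n−1, and let η∈ℕ^n be a composition with η_i>η_{i+1}; let s_iη be the composition obtained from η by exchanging entries i and i+1. Then e_{s_iη}(q,t)=e_η(q,t), e'_{s_iη}(q,t)=e'_η(q,t), l(s_iη)=l(η)+1, and l'(s_iη)=l'(η). -/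
/- STATEMENT 4: For η ∈ ℕ^n with η_i > η_{i+1} and s_iη the swap of entries i, i+1:
   e_{s_iη} = e_η,  e'_{s_iη} = e'_η,  l(s_iη) = l(η)+1,  l'(s_iη) = l'(η). -/

open Finset

namespace Stmt4

variable {R : Type*} [CommRing R]

/-- leg colength l'_η(i) -/
def legCo (n : ℕ) (η : Fin n → ℕ) (i : Fin n) : ℕ :=
  (univ.filter fun k => k < i ∧ η i ≤ η k).card +
  (univ.filter fun k => i < k ∧ η i < η k).card

/-- leg length l(s) of the node s = (i,j) -/
def leg (n : ℕ) (η : Fin n → ℕ) (i : Fin n) (j : ℕ) : ℕ :=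
  (univ.filter fun k => i < k ∧ j ≤ η k ∧ η k ≤ η i).card +
  (univ.filter fun k => k < i ∧ j ≤ η k + 1 ∧ η k + 1 ≤ η i).card

/-- e_η(q,t) = ∏_s (1 − q^{a'(s)+1} t^{n−l'(s)}) -/
def eP (n : ℕ) (η : Fin n → ℕ) (q t : R) : R :=
  ∏ i : Fin n, ∏ j ∈ Finset.Icc 1 (η i), (1 - q ^ ((j - 1) + 1) * t ^ (n - legCo n η i))

/-- e'_η(q,t) = ∏_s (1 − q^{a'(s)+1} t^{n−1−l'(s)}) -/
def eP' (n : ℕ) (η : Fin n → ℕ) (q t : R) : R :=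
  ∏ i : Fin n, ∏ j ∈ Finset.Icc 1 (η i), (1 - q ^ ((j - 1) + 1) * t ^ (n - 1 - legCo n η i))

/-- l(η) = Σ_s l(s) -/
def lTot (n : ℕ) (η : Fin n → ℕ) : ℕ :=
  ∑ i : Fin n, ∑ j ∈ Finset.Icc 1 (η i), leg n η i j

/-- l'(η) = Σ_s l'(s) -/
def lcoTot (n : ℕ) (η : Fin n → ℕ) : ℕ :=
  ∑ i : Fin n, ∑ j ∈ Finset.Icc 1 (η i), legCo n η i

end Stmt4

open Stmt4

theorem swap_lt (n : ℕ) (i : ℕ) (hii : i + 1 < n) (k m : Fin n)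
    (h1 : ¬ (k.val = i ∧ m.val = i + 1)) (h2 : ¬ (k.val = i + 1 ∧ m.val = i)) :
    (Equiv.swap (⟨i, Nat.lt_of_succ_lt hii⟩ : Fin n) ⟨i + 1, hii⟩ k <
      Equiv.swap (⟨i, Nat.lt_of_succ_lt hii⟩ : Fin n) ⟨i + 1, hii⟩ m) ↔ k < m := by
  simp only [Equiv.swap_apply_def, Fin.ext_iff]
  split_ifs <;> simp only [Fin.lt_def] <;> omega

theorem legCo_swap (n : ℕ) (i : ℕ) (η : Fin n → ℕ)
    (hii : i + 1 < n)
    (hlt : η ⟨i + 1, hii⟩ < η ⟨i, Nat.lt_of_succ_lt hii⟩) (k : Fin n) :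
    legCo n (η ∘ Equiv.swap (⟨i, Nat.lt_of_succ_lt hii⟩ : Fin n) ⟨i + 1, hii⟩)
      (Equiv.swap (⟨i, Nat.lt_of_succ_lt hii⟩ : Fin n) ⟨i + 1, hii⟩ k) = legCo n η k := by
  unfold legCo
  simp only [Finset.card_filter, ← Finset.sum_add_distrib]
  rw [← Equiv.sum_comp (Equiv.swap (⟨i, Nat.lt_of_succ_lt hii⟩ : Fin n) ⟨i + 1, hii⟩)]
  refine Finset.sum_congr rfl fun m _ => ?_
  simp only [Function.comp, Equiv.swap_apply_self]
  by_cases h1 : k.val = i ∧ m.val = i + 1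
  · obtain rfl : k = ⟨i, Nat.lt_of_succ_lt hii⟩ := Fin.ext h1.1
    obtain rfl : m = ⟨i + 1, hii⟩ := Fin.ext h1.2
    simp [Fin.lt_def, not_le.mpr hlt, hlt.le]
  by_cases h2 : k.val = i + 1 ∧ m.val = i
  · obtain rfl : k = ⟨i + 1, hii⟩ := Fin.ext h2.1
    obtain rfl : m = ⟨i, Nat.lt_of_succ_lt hii⟩ := Fin.ext h2.2
    simp [Fin.lt_def, hlt, hlt.le]
  simp only [swap_lt n i hii k m h1 h2, swap_lt n i hii m k (by tauto) (by tauto)]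

theorem leg_swap (n : ℕ) (i : ℕ) (η : Fin n → ℕ)
    (hii : i + 1 < n)
    (hlt : η ⟨i + 1, hii⟩ < η ⟨i, Nat.lt_of_succ_lt hii⟩) (k : Fin n) (j : ℕ) :
    leg n (η ∘ Equiv.swap (⟨i, Nat.lt_of_succ_lt hii⟩ : Fin n) ⟨i + 1, hii⟩)
      (Equiv.swap (⟨i, Nat.lt_of_succ_lt hii⟩ : Fin n) ⟨i + 1, hii⟩ k) j = leg n η k j +
      ∑ m : Fin n, if m = ⟨i + 1, hii⟩ then
        (if k = ⟨i, Nat.lt_of_succ_lt hii⟩ then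
          (if j = η ⟨i + 1, hii⟩ + 1 then 1 else 0) else 0) else 0 := by
  unfold leg
  simp only [Finset.card_filter, ← Finset.sum_add_distrib]
  rw [← Equiv.sum_comp (Equiv.swap (⟨i, Nat.lt_of_succ_lt hii⟩ : Fin n) ⟨i + 1, hii⟩)]
  refine Finset.sum_congr rfl fun m _ => ?_
  simp only [Function.comp, Equiv.swap_apply_self]
  by_cases h1 : k.val = i ∧ m.val = i + 1
  · obtain rfl : k = ⟨i, Nat.lt_of_succ_lt hii⟩ := Fin.ext h1.1
    obtain rfl : m = ⟨i + 1, hii⟩ := Fin.ext h1.2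
    simp [Fin.lt_def]
    split_ifs <;> omega
  by_cases h2 : k.val = i + 1 ∧ m.val = i
  · obtain rfl : k = ⟨i + 1, hii⟩ := Fin.ext h2.1
    obtain rfl : m = ⟨i, Nat.lt_of_succ_lt hii⟩ := Fin.ext h2.2
    simp [Fin.lt_def]
    split_ifs <;> omega
  simp only [swap_lt n i hii k m h1 h2, swap_lt n i hii m k (by tauto) (by tauto)]
  have h3 : (if m = ⟨i + 1, hii⟩ then
        (if k = ⟨i, Nat.lt_of_succ_lt hii⟩ then
          (if j = η ⟨i + 1, hii⟩ + 1 then 1 else 0) else 0) else 0) = 0 := by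
    simp only [Fin.ext_iff]
    split_ifs <;> first | rfl | (exfalso; omega)
  rw [h3, add_zero]

theorem stmt_4 (n : ℕ) (i : ℕ) (η : Fin n → ℕ)
    (hii : i + 1 < n)
    (hlt : η ⟨i + 1, hii⟩ < η ⟨i, Nat.lt_of_succ_lt hii⟩)
    (siη : Fin n → ℕ)
    (hsi : siη = η ∘ Equiv.swap (⟨i, Nat.lt_of_succ_lt hii⟩ : Fin n) ⟨i + 1, hii⟩) :
    eP n siη (MvPolynomial.X 0 : MvPolynomial (Fin 2) ℤ) (MvPolynomial.X 1)
        = eP n η (MvPolynomial.X 0) (MvPolynomial.X 1) ∧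
    eP' n siη (MvPolynomial.X 0 : MvPolynomial (Fin 2) ℤ) (MvPolynomial.X 1)
        = eP' n η (MvPolynomial.X 0) (MvPolynomial.X 1) ∧
    lTot n siη = lTot n η + 1 ∧
    lcoTot n siη = lcoTot n η := by
  subst hsi
  refine ⟨?_, ?_, ?_, ?_⟩
  · unfold eP
    rw [← Equiv.prod_comp (Equiv.swap (⟨i, Nat.lt_of_succ_lt hii⟩ : Fin n) ⟨i + 1, hii⟩)]
    simp only [legCo_swap n i η hii hlt, Function.comp, Equiv.swap_apply_self]
  · unfold eP'
    rw [← Equiv.prod_comp (Equiv.swap (⟨i, Nat.lt_of_succ_lt hii⟩ : Fin n) ⟨i + 1, hii⟩)]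
    simp only [legCo_swap n i η hii hlt, Function.comp, Equiv.swap_apply_self]
  · unfold lTot
    rw [← Equiv.sum_comp (Equiv.swap (⟨i, Nat.lt_of_succ_lt hii⟩ : Fin n) ⟨i + 1, hii⟩)]
    simp only [leg_swap n i η hii hlt, Finset.sum_add_distrib]
    simp only [Function.comp_apply, Equiv.swap_apply_self, Finset.sum_ite_eq', Finset.mem_univ,
      if_true]
    congr 1
    rw [Finset.sum_eq_single (⟨i, Nat.lt_of_succ_lt hii⟩ : Fin n)]
    · simp only [if_true, Finset.sum_ite_eq', Finset.mem_Icc]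
      rw [if_pos (by omega)]
    · intro b _ hb
      simp [hb]
    · simp
  · unfold lcoTot
    rw [← Equiv.sum_comp (Equiv.swap (⟨i, Nat.lt_of_succ_lt hii⟩ : Fin n) ⟨i + 1, hii⟩)]
    simp only [legCo_swap n i η hii hlt, Function.comp, Equiv.swap_apply_self]
end

section
/- Let η∈ℕ^n and let E_η be the non-symmetric Macdonald polynomial. Let ι be the ℚ-algebra involution of K[x_1,…,x_n] determined by ι(q)=q^{−1}, ι(t)=t^{−1}, and ι(x_i)=x_{n+1−i}, and set Ê_η := ι(E_η). Let w_0∈S_n be the longest permutation (w_0(i)=n+1−i). Then T_{w_0} Ê_η = t^{#{(i,j) : 1≤i<j≤n, η_i≥η_j}}·E_η. -/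
/- STATEMENT 5: T_{w₀} Ê_η = t^{#{(i,j) : i<j, η_i≥η_j}}·E_η, where Ê_η = ι(E_η) and ι is
the ℚ-algebra involution with ι(q)=q⁻¹, ι(t)=t⁻¹, ι(x_i)=x_{n+1−i}, and w₀ is the longest
permutation. -/

open Finset MvPolynomial

namespace Stmt5

/-- leg colength l'_η(i) -/
def legCo (n : ℕ) (η : Fin n → ℕ) (i : Fin n) : ℕ :=
  (univ.filter fun k => k < i ∧ η i ≤ η k).card +
  (univ.filter fun k => i < k ∧ η i < η k).card

/-- leg length l(s) of the node s = (i,j) -/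
def leg (n : ℕ) (η : Fin n → ℕ) (i : Fin n) (j : ℕ) : ℕ :=
  (univ.filter fun k => i < k ∧ j ≤ η k ∧ η k ≤ η i).card +
  (univ.filter fun k => k < i ∧ j ≤ η k + 1 ∧ η k + 1 ≤ η i).card

/-- The field K = ℚ(q,t). -/
abbrev K : Type := FractionRing (MvPolynomial (Fin 2) ℚ)

noncomputable def q : K := algebraMap (MvPolynomial (Fin 2) ℚ) K (X 0)
noncomputable def t : K := algebraMap (MvPolynomial (Fin 2) ℚ) K (X 1)

/-- The polynomial ring K[x_1,…,x_n]. -/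
abbrev P (n : ℕ) : Type := MvPolynomial (Fin n) K

/-- the automorphism s_k exchanging x_k and x_{k+1} (0-indexed; identity out of range) -/
noncomputable def sOp (n : ℕ) (k : ℕ) : P n →ₗ[K] P n :=
  if h : k + 1 < n then
    (rename (Equiv.swap (⟨k, Nat.lt_of_succ_lt h⟩ : Fin n) ⟨k + 1, h⟩)).toLinearMap
  else LinearMap.id

/-- τ_1 : x_1 ↦ qv·x_1 (the first variable is 0-indexed) -/
noncomputable def tauOp (n : ℕ) (qv : K) : P n →ₗ[K] P n :=
  (aeval (fun j : Fin n => if (j : ℕ) = 0 then C qv * X j else X j)).toLinearMap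

/-- ω := s_{n−1}⋯s_2 s_1 τ_1 -/
noncomputable def omegaOp (n : ℕ) (qv : K) : P n →ₗ[K] P n :=
  (List.range (n - 1)).foldl (fun acc k => sOp n k ∘ₗ acc) (tauOp n qv)

/-- The defining property of the Demazure–Lustig operators T_k (0-indexed), for the
parameter value tv: (x_k − x_{k+1})·(T_k f) = (x_k − x_{k+1})·tv·f
+ (tv·x_k − x_{k+1})·(s_k f − f), i.e. T_k f is the polynomial quotient from the usual
definition. -/
def IsDL (n : ℕ) (tv : K) (T : ℕ → P n →ₗ[K] P n) : Prop :=
  ∀ k, ∀ hk : k + 1 < n, ∀ f : P n,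
    (X (⟨k, Nat.lt_of_succ_lt hk⟩ : Fin n) - X ⟨k + 1, hk⟩) * T k f =
      (X (⟨k, Nat.lt_of_succ_lt hk⟩ : Fin n) - X ⟨k + 1, hk⟩) * (C tv * f) +
      (C tv * X (⟨k, Nat.lt_of_succ_lt hk⟩ : Fin n) - X ⟨k + 1, hk⟩) * (sOp n k f - f)

/-- T_k⁻¹ = tv⁻¹ − 1 + tv⁻¹ T_k -/
noncomputable def Tinv (n : ℕ) (tv : K) (T : ℕ → P n →ₗ[K] P n) (k : ℕ) : P n →ₗ[K] P n :=
  tv⁻¹ • LinearMap.id - LinearMap.id + tv⁻¹ • T k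

/-- The Cherednik operator Y_i (0-indexed i):
Y_i = tv^{i+1−n}·T_i⋯T_{n−2}·ω·T_0⁻¹⋯T_{i−1}⁻¹. -/
noncomputable def Yop (n : ℕ) (qv tv : K) (T : ℕ → P n →ₗ[K] P n) (i : Fin n) :
    P n →ₗ[K] P n :=
  (tv ^ (n - 1 - (i : ℕ)))⁻¹ •
    (((List.range' (i : ℕ) (n - 1 - (i : ℕ))).foldr (fun k acc => T k ∘ₗ acc) LinearMap.id) ∘ₗ
      omegaOp n qv ∘ₗ
      ((List.range (i : ℕ)).foldr (fun k acc => Tinv n tv T k ∘ₗ acc) LinearMap.id))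

/-- the decreasing rearrangement η⁺ of η -/
noncomputable def sortDesc (n : ℕ) (η : Fin n → ℕ) : Fin n → ℕ :=
  fun i => η (Tuple.sort η i.rev)

/-- dominance order on n-tuples (of equal sum) -/
def domLE (n : ℕ) (ν μ : Fin n → ℕ) : Prop :=
  (∑ i, ν i = ∑ i, μ i) ∧
  ∀ p : Fin n, ∑ i ∈ univ.filter (· ≤ p), ν i ≤ ∑ i ∈ univ.filter (· ≤ p), μ i

def domLT (n : ℕ) (ν μ : Fin n → ℕ) : Prop := domLE n ν μ ∧ ν ≠ μ

/-- the order ≺ : ν ≺ η iff ν⁺ < η⁺, or ν⁺ = η⁺ and ν < η (dominance order) -/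
noncomputable def prec (n : ℕ) (ν η : Fin n → ℕ) : Prop :=
  domLT n (sortDesc n ν) (sortDesc n η) ∨ (sortDesc n ν = sortDesc n η ∧ domLT n ν η)

/-- E is the non-symmetric Macdonald polynomial for the composition η (with parameters
qv, tv and Demazure–Lustig operators T): it has the triangular form
E = x^η + Σ_{ν≺η} b_{ην} x^ν and satisfies Y_i E = qv^{η_i}·tv^{−l'_η(i)}·E for all i. -/
noncomputable def IsNSMac (n : ℕ) (qv tv : K) (T : ℕ → P n →ₗ[K] P n)
    (η : Fin n → ℕ) (E : P n) : Prop :=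
  coeff (Finsupp.equivFunOnFinite.symm η) E = 1 ∧
  (∀ ν : Fin n →₀ ℕ, coeff ν E ≠ 0 → (ν : Fin n → ℕ) = η ∨ prec n (ν : Fin n → ℕ) η) ∧
  ∀ i : Fin n, Yop n qv tv T i E = (qv ^ η i / tv ^ legCo n η i) • E

/-- the adjacent transposition s_k as a permutation (identity out of range, 0-indexed) -/
def sPerm (n : ℕ) (k : ℕ) : Equiv.Perm (Fin n) :=
  if h : k + 1 < n then Equiv.swap ⟨k, Nat.lt_of_succ_lt h⟩ ⟨k + 1, h⟩ else 1

/-- the length l(σ) of a permutation, i.e. its number of inversions -/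
def inversions {n : ℕ} (σ : Equiv.Perm (Fin n)) : ℕ :=
  (univ.filter fun p : Fin n × Fin n => p.1 < p.2 ∧ σ p.2 < σ p.1).card

/-- The defining property of σ ↦ T_σ: T_1 = id and T_{σ·s_k} = T_σ ∘ T_k whenever
l(σ·s_k) = l(σ)+1; by the braid relations this determines T_σ = T_{i_1}⋯T_{i_p} for any
reduced word σ = s_{i_1}⋯s_{i_p}. -/
def IsTsigma (n : ℕ) (T : ℕ → P n →ₗ[K] P n)
    (Tw : Equiv.Perm (Fin n) → P n →ₗ[K] P n) : Prop :=
  Tw 1 = LinearMap.id ∧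
  ∀ σ : Equiv.Perm (Fin n), ∀ k, k + 1 < n →
    inversions (σ * sPerm n k) = inversions σ + 1 →
    Tw (σ * sPerm n k) = Tw σ ∘ₗ T k

/-- U⁺ := Σ_σ T_σ -/
noncomputable def Uplus (n : ℕ) (Tw : Equiv.Perm (Fin n) → P n →ₗ[K] P n) :
    P n →ₗ[K] P n := ∑ σ : Equiv.Perm (Fin n), Tw σ

/-- U⁻ := Σ_σ (−tv)^{−l(σ)} T_σ -/
noncomputable def Uminus (n : ℕ) (tv : K) (Tw : Equiv.Perm (Fin n) → P n →ₗ[K] P n) :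
    P n →ₗ[K] P n := ∑ σ : Equiv.Perm (Fin n), ((-tv) ^ inversions σ)⁻¹ • Tw σ

/-- the monomial x^η -/
noncomputable def xmon (n : ℕ) (η : Fin n → ℕ) : P n :=
  monomial (Finsupp.equivFunOnFinite.symm η) 1

end Stmt5

open Stmt5


namespace Stmt5

theorem sPerm_val {n k : ℕ} (hk : k + 1 < n) (i : Fin n) :
    ((sPerm n k i : Fin n) : ℕ) = if (i : ℕ) = k then k + 1 else if (i : ℕ) = k + 1 then k else i := by
  unfold sPerm
  rw [dif_pos hk, Equiv.swap_apply_def]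
  simp only [Fin.ext_iff]
  split_ifs <;> simp

theorem sPerm_mul_self (n k : ℕ) : sPerm n k * sPerm n k = 1 := by
  unfold sPerm
  split_ifs <;> simp

theorem sPerm_sPerm (n k : ℕ) (i : Fin n) : sPerm n k (sPerm n k i) = i := by
  have := congrArg (fun p : Equiv.Perm (Fin n) => p i) (sPerm_mul_self n k)
  simpa using this

theorem sPerm_symm (n k : ℕ) : (sPerm n k).symm = sPerm n k := by
  ext i
  exact congrArg Fin.val ((Equiv.symm_apply_eq _).mpr (sPerm_sPerm n k i).symm)

/-- inversion set -/
def invSet {n : ℕ} (σ : Equiv.Perm (Fin n)) : Finset (Fin n × Fin n) :=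
  univ.filter fun p : Fin n × Fin n => p.1 < p.2 ∧ σ p.2 < σ p.1

theorem mem_invSet {n : ℕ} (σ : Equiv.Perm (Fin n)) (a b : Fin n) :
    (a, b) ∈ invSet σ ↔ a < b ∧ σ b < σ a := by
  simp [invSet]

/-- the ascent condition -/
def Asc {n : ℕ} (σ : Equiv.Perm (Fin n)) (k : ℕ) (hk : k + 1 < n) : Prop :=
  σ ⟨k, Nat.lt_of_succ_lt hk⟩ < σ ⟨k + 1, hk⟩

theorem invSet_mul {n k : ℕ} (hk : k + 1 < n) (σ : Equiv.Perm (Fin n)) (h : Asc σ k hk) :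
    invSet (σ * sPerm n k) = insert (⟨k, Nat.lt_of_succ_lt hk⟩, ⟨k + 1, hk⟩)
      ((invSet σ).map ((sPerm n k).prodCongr (sPerm n k)).toEmbedding) := by
  have e1 : sPerm n k ⟨k, Nat.lt_of_succ_lt hk⟩ = ⟨k + 1, hk⟩ := by
    apply Fin.ext; rw [sPerm_val hk]; simp
  have e2 : sPerm n k ⟨k + 1, hk⟩ = ⟨k, Nat.lt_of_succ_lt hk⟩ := by
    apply Fin.ext; rw [sPerm_val hk]; simp
  ext ⟨a, b⟩
  simp only [mem_insert, Finset.mem_map_equiv, mem_invSet,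
    Equiv.Perm.mul_apply, Equiv.prodCongr_symm, Equiv.prodCongr_apply, Prod.map, sPerm_symm,
    Prod.mk.injEq]
  have ha := sPerm_val hk a
  have hb := sPerm_val hk b
  constructor
  · rintro ⟨h1, h2⟩
    by_cases hc : (a : ℕ) = k ∧ (b : ℕ) = k + 1
    · left; exact ⟨Fin.ext hc.1, Fin.ext hc.2⟩
    · right
      refine ⟨?_, h2⟩
      rw [Fin.lt_def] at h1 ⊢
      rw [ha, hb]
      split_ifs <;> omega
  · rintro (⟨rfl, rfl⟩ | ⟨h1, h2⟩)
    · refine ⟨by simp [Fin.lt_def], ?_⟩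
      rw [e1, e2]; exact h
    · refine ⟨?_, h2⟩
      by_contra hc
      rw [Fin.lt_def] at h1 hc
      rw [ha, hb] at h1
      have : (a : ℕ) = k + 1 ∧ (b : ℕ) = k := by split_ifs at h1 <;> omega
      have h3 : a = ⟨k + 1, hk⟩ := Fin.ext this.1
      have h4 : b = ⟨k, Nat.lt_of_succ_lt hk⟩ := Fin.ext this.2
      subst h3 h4
      rw [e1, e2] at h2
      exact absurd h (not_lt.mpr h2.le)

theorem notMem_aux {n k : ℕ} (hk : k + 1 < n) (σ : Equiv.Perm (Fin n)) :
    ((⟨k, Nat.lt_of_succ_lt hk⟩, ⟨k + 1, hk⟩) : Fin n × Fin n) ∉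
      ((invSet σ).map ((sPerm n k).prodCongr (sPerm n k)).toEmbedding) := by
  simp only [Finset.mem_map_equiv, mem_invSet,
    Equiv.prodCongr_symm, Equiv.prodCongr_apply, Prod.map, sPerm_symm]
  rintro ⟨h, -⟩
  rw [Fin.lt_def, sPerm_val hk, sPerm_val hk] at h
  simp at h

theorem inversions_mul {n k : ℕ} (hk : k + 1 < n) (σ : Equiv.Perm (Fin n)) (h : Asc σ k hk) :
    inversions (σ * sPerm n k) = inversions σ + 1 := by
  have := congrArg Finset.card (invSet_mul hk σ h)
  rw [card_insert_of_notMem (notMem_aux hk σ), card_map] at this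
  exact this

theorem exists_desc {n : ℕ} (σ : Equiv.Perm (Fin n)) (h : σ ≠ 1) :
    ∃ k, ∃ hk : k + 1 < n, σ ⟨k + 1, hk⟩ < σ ⟨k, Nat.lt_of_succ_lt hk⟩ := by
  by_contra hc
  push Not at hc
  apply h
  have hm : StrictMono σ := by
    cases n with
    | zero => intro a; exact a.elim0
    | succ m =>
      rw [Fin.strictMono_iff_lt_succ]
      intro i
      refine lt_of_le_of_ne (hc i (by omega)) ?_
      intro he
      have := σ.injective he
      simp [Fin.ext_iff] at this
  have hs := Subsingleton.elim (hm.orderIsoOfSurjective σ σ.surjective) (OrderIso.refl _)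
  ext i
  have := congrArg (fun e : Fin n ≃o Fin n => e i) hs
  simpa using congrArg Fin.val this

theorem perm_induction {n : ℕ} {M : Equiv.Perm (Fin n) → Prop} (h1 : M 1)
    (hs : ∀ σ k, ∀ hk : k + 1 < n, Asc σ k hk → M σ → M (σ * sPerm n k)) : ∀ σ, M σ := by
  intro σ
  induction hN : inversions σ using Nat.strong_induction_on generalizing σ with
  | _ N ih =>
    by_cases h : σ = 1
    · rw [h]; exact h1
    · obtain ⟨k, hk, hd⟩ := exists_desc σ h
      have e : σ = (σ * sPerm n k) * sPerm n k := by rw [mul_assoc, sPerm_mul_self, mul_one]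
      have ha : Asc (σ * sPerm n k) k hk := by
        unfold Asc
        have e1 : sPerm n k ⟨k, Nat.lt_of_succ_lt hk⟩ = ⟨k + 1, hk⟩ := by
          apply Fin.ext; rw [sPerm_val hk]; simp
        have e2 : sPerm n k ⟨k + 1, hk⟩ = ⟨k, Nat.lt_of_succ_lt hk⟩ := by
          apply Fin.ext; rw [sPerm_val hk]; simp
        rw [Equiv.Perm.mul_apply, Equiv.Perm.mul_apply, e1, e2]
        exact hd
      have hi := inversions_mul hk _ ha
      rw [← e] at hi
      rw [e]
      exact hs _ k hk ha (ih _ (by omega) _ rfl)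

section Tw
variable {n : ℕ} {T : ℕ → P n →ₗ[K] P n} {Tw : Equiv.Perm (Fin n) → P n →ₗ[K] P n}

theorem Tw_right (hTw : IsTsigma n T Tw) (σ : Equiv.Perm (Fin n)) {k : ℕ} (hk : k + 1 < n)
    (h : Asc σ k hk) : Tw (σ * sPerm n k) = Tw σ * T k :=
  hTw.2 σ k hk (inversions_mul hk σ h)

theorem Tw_left (hTw : IsTsigma n T Tw) (σ : Equiv.Perm (Fin n)) : ∀ {k : ℕ} (hk : k + 1 < n)
    (_ : Asc σ⁻¹ k hk), Tw (sPerm n k * σ) = T k * Tw σ := by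
  have one : Tw 1 = 1 := hTw.1
  induction σ using perm_induction with
  | h1 =>
    intro k hk h
    have := Tw_right hTw 1 hk (by simp [Asc, Fin.lt_def])
    simpa [one] using this
  | hs σ m hm ha ih =>
    intro k hk h
    unfold Asc at h ha
    have inv : (σ * sPerm n m)⁻¹ = sPerm n m * σ⁻¹ := by
      rw [mul_inv_rev]; congr 1
      exact sPerm_symm n m
    rw [inv, Equiv.Perm.mul_apply, Equiv.Perm.mul_apply, Fin.lt_def, sPerm_val hm, sPerm_val hm] at h
    have hne : (σ⁻¹ ⟨k, Nat.lt_of_succ_lt hk⟩ : Fin n) ≠ σ⁻¹ ⟨k + 1, hk⟩ := by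
      intro he
      have := σ⁻¹.injective he
      simp at this
    have A : Asc σ⁻¹ k hk := by
      unfold Asc
      by_contra hc
      have h1 : ((σ⁻¹ ⟨k, Nat.lt_of_succ_lt hk⟩ : Fin n) : ℕ) = m + 1 ∧
          ((σ⁻¹ ⟨k + 1, hk⟩ : Fin n) : ℕ) = m := by
        rw [Fin.lt_def] at hc
        rw [Ne, Fin.ext_iff] at hne
        split_ifs at h <;> omega
      have h2 : σ⁻¹ ⟨k, Nat.lt_of_succ_lt hk⟩ = ⟨m + 1, hm⟩ := Fin.ext h1.1
      have h3 : σ⁻¹ ⟨k + 1, hk⟩ = ⟨m, Nat.lt_of_succ_lt hm⟩ := Fin.ext h1.2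
      rw [← h2, ← h3] at ha
      simp [Fin.lt_def] at ha
    have B : Asc (sPerm n k * σ) m hm := by
      unfold Asc
      rw [Equiv.Perm.mul_apply, Equiv.Perm.mul_apply, Fin.lt_def, sPerm_val hk, sPerm_val hk]
      by_contra hc
      rw [Fin.lt_def] at ha
      have h1 : ((σ ⟨m, Nat.lt_of_succ_lt hm⟩ : Fin n) : ℕ) = k ∧
          ((σ ⟨m + 1, hm⟩ : Fin n) : ℕ) = k + 1 := by
        split_ifs at hc <;> omega
      have h2 : σ ⟨m, Nat.lt_of_succ_lt hm⟩ = ⟨k, Nat.lt_of_succ_lt hk⟩ := Fin.ext h1.1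
      have h3 : σ ⟨m + 1, hm⟩ = ⟨k + 1, hk⟩ := Fin.ext h1.2
      rw [← h2, ← h3] at h
      simp at h
    rw [← mul_assoc, Tw_right hTw _ hm B, ih hk A, Tw_right hTw _ hm ha, mul_assoc]

end Tw
end Stmt5

namespace Stmt5

theorem sOp_eq (n k : ℕ) (f : P n) : sOp n k f = rename (sPerm n k) f := by
  unfold sOp sPerm
  split_ifs with h
  · rfl
  · simp

theorem q_ne_zero : q ≠ 0 := by
  unfold q
  rw [Ne, map_eq_zero_iff _ (IsFractionRing.injective (MvPolynomial (Fin 2) ℚ) K)]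
  exact X_ne_zero 0

theorem t_ne_zero : t ≠ 0 := by
  unfold t
  rw [Ne, map_eq_zero_iff _ (IsFractionRing.injective (MvPolynomial (Fin 2) ℚ) K)]
  exact X_ne_zero 1

theorem qt_nat {a b m l : ℕ} (h : q ^ a * t ^ m = q ^ b * t ^ l) : a = b := by
  unfold q t at h
  rw [← map_pow, ← map_pow, ← map_pow, ← map_pow, ← map_mul, ← map_mul] at h
  have h2 := IsFractionRing.injective (MvPolynomial (Fin 2) ℚ) K h
  have h3 := congrArg (aeval (fun i : Fin 2 => if i = 0 then (Polynomial.X : Polynomial ℚ) else 1)) h2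
  simp at h3
  have h4 := congrArg Polynomial.natDegree h3
  simpa using h4

theorem qt_zpow {a b : ℕ} {m l : ℤ} (h : q ^ a * t ^ m = q ^ b * t ^ l) : a = b := by
  obtain ⟨m1, m2, rfl⟩ : ∃ m1 m2 : ℕ, m = m1 - m2 := ⟨m.toNat, (-m).toNat, by omega⟩
  obtain ⟨l1, l2, rfl⟩ : ∃ m1 m2 : ℕ, l = m1 - m2 := ⟨l.toNat, (-l).toNat, by omega⟩
  rw [zpow_sub₀ t_ne_zero, zpow_sub₀ t_ne_zero] at h
  have h1 := pow_ne_zero m2 t_ne_zero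
  have h2 := pow_ne_zero l2 t_ne_zero
  simp only [zpow_natCast] at h
  field_simp at h
  apply qt_nat (m := m1 + l2) (l := l1 + m2)
  rw [pow_add, pow_add]
  linear_combination h

section DL
variable {n : ℕ} {T : ℕ → P n →ₗ[K] P n}

theorem D_ne_zero {k : ℕ} (hk : k + 1 < n) :
    (X (⟨k, Nat.lt_of_succ_lt hk⟩ : Fin n) - X ⟨k + 1, hk⟩ : P n) ≠ 0 := by
  intro h
  have := (X_injective (R := K)) (sub_eq_zero.mp h)
  simp at this

theorem sPerm_l {k : ℕ} (hk : k + 1 < n) :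
    sPerm n k ⟨k, Nat.lt_of_succ_lt hk⟩ = ⟨k + 1, hk⟩ := by
  apply Fin.ext; rw [sPerm_val hk]; simp

theorem sPerm_r {k : ℕ} (hk : k + 1 < n) :
    sPerm n k ⟨k + 1, hk⟩ = ⟨k, Nat.lt_of_succ_lt hk⟩ := by
  apply Fin.ext; rw [sPerm_val hk]; simp

theorem s_s (k : ℕ) (f : P n) : rename (sPerm n k) (rename (sPerm n k) f) = f := by
  rw [rename_rename]
  have : (⇑(sPerm n k) ∘ ⇑(sPerm n k)) = id := by
    funext i; simp [sPerm_sPerm]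
  rw [this, rename_id_apply]

theorem T_quad (hT : IsDL n t T) {k : ℕ} (hk : k + 1 < n) (f : P n) :
    T k (T k f) = C (t - 1) * T k f + C t * f := by
  have h1 := hT k hk f
  have h2 := hT k hk (T k f)
  have h3 := congrArg (rename (sPerm n k)) h1
  rw [sOp_eq] at h1 h2
  simp only [sOp_eq, map_mul, map_sub, map_add, rename_X, rename_C, sPerm_l hk, sPerm_r hk, s_s] at h3
  have hD := D_ne_zero hk
  apply mul_left_cancel₀ (mul_ne_zero hD hD)
  rw [map_sub, map_one]
  linear_combination (X (⟨k, Nat.lt_of_succ_lt hk⟩ : Fin n) - X ⟨k + 1, hk⟩) * h2 +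
    (-(C t - 1) * X (⟨k, Nat.lt_of_succ_lt hk⟩ : Fin n)) * h1 - (C t * X (⟨k, Nat.lt_of_succ_lt hk⟩ : Fin n) - X ⟨k + 1, hk⟩) * h3

theorem Tinv_apply (k : ℕ) (f : P n) : Tinv n t T k f = C t⁻¹ * f - f + C t⁻¹ * T k f := by
  simp [Tinv, smul_eq_C_mul]

theorem Ct : (C t⁻¹ * C t : P n) = 1 := by
  rw [← map_mul, inv_mul_cancel₀ t_ne_zero, map_one]

theorem T_Tinv (hT : IsDL n t T) {k : ℕ} (hk : k + 1 < n) : T k * Tinv n t T k = 1 := by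
  refine LinearMap.ext fun f => ?_
  rw [Module.End.mul_apply, Tinv_apply, ← smul_eq_C_mul, ← smul_eq_C_mul, map_add, map_sub, map_smul, map_smul,
    T_quad hT hk, Module.End.one_apply]
  simp only [smul_eq_C_mul, map_sub, map_one]
  linear_combination (T k f + f) * Ct (n := n)

theorem Tinv_T (hT : IsDL n t T) {k : ℕ} (hk : k + 1 < n) : Tinv n t T k * T k = 1 := by
  refine LinearMap.ext fun f => ?_
  rw [Module.End.mul_apply, Tinv_apply, T_quad hT hk, Module.End.one_apply]
  simp only [map_sub, map_one]
  linear_combination (T k f + f) * Ct (n := n)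

theorem T_eq (hT : IsDL n t T) {k : ℕ} (hk : k + 1 < n) {f g : P n}
    (h : (X (⟨k, Nat.lt_of_succ_lt hk⟩ : Fin n) - X ⟨k + 1, hk⟩) * g =
      (X (⟨k, Nat.lt_of_succ_lt hk⟩ : Fin n) - X ⟨k + 1, hk⟩) * (C t * f) +
      (C t * X (⟨k, Nat.lt_of_succ_lt hk⟩ : Fin n) - X ⟨k + 1, hk⟩) * (rename (sPerm n k) f - f)) :
    T k f = g := by
  apply mul_left_cancel₀ (D_ne_zero hk)
  rw [hT k hk f, h, sOp_eq]

end DL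

section omega
variable {n : ℕ}

/-- the cycle 0 ↦ n-1, m ↦ m-1 -/
def cyc (n : ℕ) : Equiv.Perm (Fin n) := (finRotate n)⁻¹

theorem cyc_inv_val (i : Fin n) : (((cyc n)⁻¹ i : Fin n) : ℕ) = if (i : ℕ) + 1 = n then 0 else (i : ℕ) + 1 := by
  cases n with
  | zero => exact i.elim0
  | succ m =>
    unfold cyc
    rw [inv_inv]
    split_ifs with h
    · have : i = Fin.last m := by ext; simp; omega
      rw [this]; simp
    · apply coe_finRotate_of_ne_last
      intro h'; apply h; rw [h']; simp

theorem cyc_val (i : Fin n) : ((cyc n i : Fin n) : ℕ) = if (i : ℕ) = 0 then n - 1 else i - 1 := by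
  have h := cyc_inv_val (cyc n i)
  have e : (cyc n)⁻¹ (cyc n i) = i := by simp
  rw [e] at h
  have := (cyc n i).2
  split_ifs at h ⊢ <;> omega

theorem omega_aux (j : ℕ) (hj : j < n) (qv : K) : ∃ σ : Equiv.Perm (Fin n),
    (∀ f, (List.range j).foldl (fun acc k => sOp n k ∘ₗ acc) (tauOp n qv) f
      = rename σ (tauOp n qv f)) ∧
    ∀ i : Fin n, (σ i : ℕ) = if (i : ℕ) = 0 then j else if (i : ℕ) ≤ j then i - 1 else i := by
  induction j with
  | zero =>
    refine ⟨1, ?_, ?_⟩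
    · intro f; simp
    · intro i; simp only [Equiv.Perm.one_apply]; split_ifs <;> omega
  | succ j ih =>
    obtain ⟨σ, h1, h2⟩ := ih (by omega)
    refine ⟨sPerm n j * σ, ?_, ?_⟩
    · intro f
      rw [List.range_succ, List.foldl_append]
      simp only [List.foldl_cons, List.foldl_nil, LinearMap.comp_apply]
      rw [h1, sOp_eq, rename_rename, Equiv.Perm.coe_mul]
    · intro i
      rw [Equiv.Perm.mul_apply, sPerm_val hj, h2]
      split_ifs <;> omega

/-- ω as an algebra homomorphism -/
noncomputable def om (n : ℕ) : P n →ₐ[K] P n :=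
  (rename (cyc n)).comp (aeval (fun j : Fin n => if (j : ℕ) = 0 then C q * X j else X j))

theorem omega_eq (hn : 0 < n) (f : P n) : omegaOp n q f = om n f := by
  obtain ⟨σ, h1, h2⟩ := omega_aux (n := n) (n - 1) (by omega) q
  have : σ = cyc n := by
    ext i; rw [h2, cyc_val]; split_ifs <;> omega
  rw [omegaOp, h1, this]; rfl

theorem om_X (i : Fin n) : om n (X i) = if (i : ℕ) = 0 then C q * X (cyc n i) else X (cyc n i) := by
  unfold om
  simp only [AlgHom.comp_apply, aeval_X]
  split_ifs <;> simp

theorem om_s {k : ℕ} (hk : k + 2 < n) (f : P n) :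
    om n (rename (sPerm n (k + 1)) f) = rename (sPerm n k) (om n f) := by
  have : (om n).comp (rename (sPerm n (k + 1))) = (rename (sPerm n k)).comp (om n) := by
    apply MvPolynomial.algHom_ext
    intro i
    simp only [AlgHom.comp_apply, rename_X, om_X]
    have e : cyc n (sPerm n (k + 1) i) = sPerm n k (cyc n i) := by
      apply Fin.ext
      have a1 := cyc_val (sPerm n (k + 1) i)
      have a2 := sPerm_val (n := n) (k := k) (by omega) (cyc n i)
      have a3 := sPerm_val (n := n) (k := k + 1) (by omega) i
      have a4 := cyc_val i
      grind
    have h0 := sPerm_val (n := n) (k := k + 1) (by omega) i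
    by_cases h : (i : ℕ) = 0
    · have : ((sPerm n (k + 1) i : Fin n) : ℕ) = 0 := by grind
      rw [if_pos h, if_pos this, e]; simp
    · have : ¬ ((sPerm n (k + 1) i : Fin n) : ℕ) = 0 := by grind
      rw [if_neg h, if_neg this, e]; simp
  exact congrArg (fun g : P n →ₐ[K] P n => g f) this

theorem om_T {T : ℕ → P n →ₗ[K] P n} (hT : IsDL n t T) {k : ℕ} (hk : k + 2 < n) (f : P n) :
    om n (T (k + 1) f) = T k (om n f) := by
  symm
  apply T_eq hT (by omega)
  have h := congrArg (om n) (hT (k + 1) hk f)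
  have e1 : om n (X ⟨k + 1, by omega⟩) = X ⟨k, by omega⟩ := by
    rw [om_X, if_neg (by simp)]
    congr 1; apply Fin.ext; rw [cyc_val]; simp
  have e2 : om n (X ⟨k + 2, hk⟩) = X ⟨k + 1, by omega⟩ := by
    rw [om_X, if_neg (by simp)]
    congr 1; apply Fin.ext; rw [cyc_val]; simp
  have e3 (c : K) : om n (C c) = C c := AlgHom.commutes (om n) c
  rw [sOp_eq] at h
  simp only [map_mul, map_sub, map_add, om_s hk, e3] at h
  rw [e1, e2] at h
  exact h

end omega

section iota
variable {n : ℕ} {T : ℕ → P n →ₗ[K] P n} (autK : K →+* K)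

/-- the involution ι -/
noncomputable def io (n : ℕ) (autK : K →+* K) : P n →+* P n :=
  (rename (R := K) (Fin.rev : Fin n → Fin n)).toRingHom.comp (MvPolynomial.map autK)

theorem io_apply (f : P n) : io n autK f = rename Fin.rev (MvPolynomial.map autK f) := rfl

theorem io_X (i : Fin n) : io n autK (X i) = X i.rev := by simp [io_apply]
theorem io_C (c : K) : io n autK (C c) = C (autK c) := by simp [io_apply]

theorem io_s {k : ℕ} (hk : k + 1 < n) (f : P n) :
    io n autK (rename (sPerm n k) f) = rename (sPerm n (n - 2 - k)) (io n autK f) := by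
  rw [io_apply, io_apply, map_rename, rename_rename, rename_rename]
  congr 2
  funext i
  apply Fin.ext
  simp only [Function.comp_apply, Fin.val_rev]
  rw [sPerm_val hk, sPerm_val (by omega), Fin.val_rev]
  split_ifs <;> omega

theorem io_T (hat : autK t = t⁻¹) (hT : IsDL n t T) {k : ℕ} (hk : k + 1 < n) (f : P n) :
    io n autK (T k f) = Tinv n t T (n - 2 - k) (io n autK f) := by
  have hk' : n - 2 - k + 1 < n := by omega
  have h := congrArg (io n autK) (hT k hk f)
  have h2 := hT (n - 2 - k) hk' (io n autK f)
  have e1 : (Fin.rev ⟨k, Nat.lt_of_succ_lt hk⟩ : Fin n) = ⟨n - 2 - k + 1, hk'⟩ := by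
    apply Fin.ext; simp only [Fin.val_rev]; omega
  have e2 : (Fin.rev ⟨k + 1, hk⟩ : Fin n) = ⟨n - 2 - k, Nat.lt_of_succ_lt hk'⟩ := by
    apply Fin.ext; simp only [Fin.val_rev]; omega
  rw [sOp_eq] at h h2
  simp only [map_mul, map_sub, map_add, io_s autK hk, io_C, io_X, hat, e1, e2] at h
  rw [Tinv_apply]
  apply mul_left_cancel₀ (D_ne_zero hk')
  have hc := Ct (n := n)
  generalize (C t⁻¹ : P n) = u at *
  linear_combination -h - u * h2 + 
    (X (⟨n - 2 - k, Nat.lt_of_succ_lt hk'⟩ : Fin n) * (-rename (sPerm n (n - 2 - k)) (io n autK f)) + X ⟨n - 2 - k + 1, hk'⟩ * (io n autK f)) * hc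

theorem io_Tinv (hat : autK t = t⁻¹) (hT : IsDL n t T) {k : ℕ} (hk : k + 1 < n) (f : P n) :
    io n autK (Tinv n t T k f) = T (n - 2 - k) (io n autK f) := by
  have h := io_T autK hat hT hk (Tinv n t T k f)
  have e : T k (Tinv n t T k f) = f := by
    rw [← Module.End.mul_apply, T_Tinv hT hk]; rfl
  rw [e] at h
  rw [h, ← Module.End.mul_apply, T_Tinv hT (by omega)]; rfl

theorem om_io_om (haq : autK q = q⁻¹) (f : P n) : om n (io n autK (om n f)) = io n autK f := by
  have : ((om n).toRingHom.comp (io n autK)).comp (om n).toRingHom = io n autK := by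
    apply MvPolynomial.ringHom_ext
    · intro c
      have e3 (c : K) : om n (C c) = C c := AlgHom.commutes (om n) c
      simp [io_C, e3]
    · intro i
      have e3 (c : K) : om n (C c) = C c := AlgHom.commutes (om n) c
      have hv := cyc_val i
      have hr := Fin.val_rev i
      have hr2 := Fin.val_rev (cyc n i)
      have hv2 := cyc_val (cyc n i).rev
      simp only [RingHom.comp_apply, AlgHom.toRingHom_eq_coe, RingHom.coe_coe, om_X]
      by_cases h : (i : ℕ) = 0
      · rw [if_pos h] at hv ⊢
        have h0 : ((cyc n i).rev : ℕ) = 0 := by omega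
        rw [if_pos h0] at hv2
        have : cyc n (cyc n i).rev = i.rev := by ext; omega
        rw [map_mul, map_mul, io_C, io_X, io_X, om_X, if_pos h0, this, e3, haq, ← mul_assoc, ← map_mul,
          inv_mul_cancel₀ q_ne_zero, map_one, one_mul]
      · rw [if_neg h] at hv ⊢
        have h0 : ¬ ((cyc n i).rev : ℕ) = 0 := by omega
        rw [if_neg h0] at hv2
        have : cyc n (cyc n i).rev = i.rev := by ext; omega
        rw [io_X, io_X, om_X, if_neg h0, this]
  exact congrArg (fun g : P n →+* P n => g f) this

end iota
end Stmt5

namespace Stmt5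

theorem foldr_comp {n : ℕ} (T : ℕ → P n →ₗ[K] P n) (l : List ℕ) :
    l.foldr (fun k acc => T k ∘ₗ acc) LinearMap.id = (l.map T).prod := by
  induction l with
  | nil => rfl
  | cons a l ih => simp only [List.foldr_cons, List.map_cons, List.prod_cons, ih]; rfl

theorem Yop_eq {n : ℕ} (T : ℕ → P n →ₗ[K] P n) (i : Fin n) (f : P n) :
    Yop n q t T i f = (t ^ (n - 1 - (i : ℕ)))⁻¹ •
      ((List.range' (i : ℕ) (n - 1 - (i : ℕ))).map T).prod
        (om n (((List.range (i : ℕ)).map (Tinv n t T)).prod f)) := by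
  unfold Yop
  rw [foldr_comp, foldr_comp, LinearMap.smul_apply, LinearMap.comp_apply, LinearMap.comp_apply,
    omega_eq i.pos]

section
variable {n : ℕ} {T : ℕ → P n →ₗ[K] P n} {Tw : Equiv.Perm (Fin n) → P n →ₗ[K] P n}

theorem sPerm_inv (n k : ℕ) : (sPerm n k)⁻¹ = sPerm n k := sPerm_symm n k

theorem Tw_peel (hTw : IsTsigma n T Tw) (σ : Equiv.Perm (Fin n)) {k : ℕ} (hk : k + 1 < n)
    (h : (σ⁻¹ ⟨k + 1, hk⟩ : Fin n) < σ⁻¹ ⟨k, Nat.lt_of_succ_lt hk⟩) :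
    Tw σ = T k * Tw (sPerm n k * σ) := by
  rw [← Tw_left hTw (sPerm n k * σ) hk, ← mul_assoc, sPerm_mul_self, one_mul]
  unfold Asc
  rw [mul_inv_rev, sPerm_inv, Equiv.Perm.mul_apply, Equiv.Perm.mul_apply, sPerm_l hk, sPerm_r hk]
  exact h

theorem rev_inv : (Fin.revPerm : Equiv.Perm (Fin n))⁻¹ = Fin.revPerm := by
  ext i; rfl

theorem F_T (hTw : IsTsigma n T Tw) {k : ℕ} (hk : k + 1 < n) :
    Tw Fin.revPerm * T k = T (n - 2 - k) * Tw Fin.revPerm := by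
  have hk' : n - 2 - k + 1 < n := by omega
  have e1 : Tw Fin.revPerm = T (n - 2 - k) * Tw (sPerm n (n - 2 - k) * Fin.revPerm) := by
    apply Tw_peel hTw _ hk'
    rw [rev_inv]
    simp only [Fin.revPerm_apply, Fin.lt_def, Fin.val_rev]
    omega
  have e2 : sPerm n (n - 2 - k) * Fin.revPerm = Fin.revPerm * sPerm n k := by
    ext i
    simp only [Equiv.Perm.mul_apply, Fin.revPerm_apply, Fin.val_rev]
    rw [sPerm_val hk, sPerm_val hk', Fin.val_rev]
    split_ifs <;> omega
  have e3 : Tw Fin.revPerm = Tw (Fin.revPerm * sPerm n k) * T k := by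
    rw [← Tw_right hTw _ hk, mul_assoc, sPerm_mul_self, mul_one]
    unfold Asc
    rw [Equiv.Perm.mul_apply, Equiv.Perm.mul_apply, sPerm_l hk, sPerm_r hk]
    simp only [Fin.revPerm_apply, Fin.lt_def, Fin.val_rev]
    omega
  rw [e2] at e1
  conv_lhs => rw [e1]
  conv_rhs => rw [e3]
  rw [mul_assoc]

theorem F_Tinv (hT : IsDL n t T) (hTw : IsTsigma n T Tw) {k : ℕ} (hk : k + 1 < n) :
    Tw Fin.revPerm * Tinv n t T k = Tinv n t T (n - 2 - k) * Tw Fin.revPerm := by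
  have h := F_T hTw hk
  calc _ = Tinv n t T (n - 2 - k) * (T (n - 2 - k) * Tw Fin.revPerm) * Tinv n t T k := by
        rw [← mul_assoc, Tinv_T hT (by omega), one_mul]
    _ = Tinv n t T (n - 2 - k) * Tw Fin.revPerm := by
        rw [← h, mul_assoc, mul_assoc, T_Tinv hT hk, mul_one]

theorem rho_aux (hTw : IsTsigma n T Tw) (j : ℕ) (hj : j < n) : ∃ ρ : Equiv.Perm (Fin n),
    Tw Fin.revPerm = ((List.range j).map T).prod * Tw ρ ∧
    ∀ i : Fin n, ((ρ⁻¹ i : Fin n) : ℕ) =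
      if (i : ℕ) < j then n - 2 - i else if (i : ℕ) = j then n - 1 else n - 1 - i := by
  induction j with
  | zero =>
    refine ⟨Fin.revPerm, by simp, ?_⟩
    intro i
    rw [rev_inv, Fin.revPerm_apply, Fin.val_rev]
    split_ifs <;> omega
  | succ j ih =>
    obtain ⟨ρ, h1, h2⟩ := ih (by omega)
    refine ⟨sPerm n j * ρ, ?_, ?_⟩
    · rw [List.range_succ, List.map_append, List.prod_append, h1, Tw_peel hTw ρ hj]
      · simp [mul_assoc]
      · rw [Fin.lt_def, h2, h2]
        simp
        omega
    · intro i
      have a1 := sPerm_val hj i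
      rw [mul_inv_rev, Equiv.Perm.mul_apply, sPerm_inv, h2]
      grind

theorem sigma_aux (hT : IsDL n t T) (hTw : IsTsigma n T Tw) (j : ℕ) (hj : j < n) :
    ∃ σ : Equiv.Perm (Fin n),
    ((List.range' (n - 1 - j) j).map (Tinv n t T)).prod * Tw Fin.revPerm = Tw σ ∧
    ∀ i : Fin n, ((σ⁻¹ i : Fin n) : ℕ) =
      if (i : ℕ) < n - 1 - j then n - 1 - i else if (i : ℕ) = n - 1 - j then 0 else n - i := by
  induction j with
  | zero =>
    refine ⟨Fin.revPerm, by simp, ?_⟩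
    intro i
    rw [rev_inv, Fin.revPerm_apply, Fin.val_rev]
    split_ifs <;> omega
  | succ j ih =>
    obtain ⟨σ, h1, h2⟩ := ih (by omega)
    have hk : n - 1 - (j + 1) + 1 < n := by omega
    refine ⟨sPerm n (n - 1 - (j + 1)) * σ, ?_, ?_⟩
    · rw [List.range'_succ, List.map_cons, List.prod_cons, mul_assoc]
      have : n - 1 - (j + 1) + 1 = n - 1 - j := by omega
      rw [this, h1, Tw_peel hTw σ hk, ← mul_assoc, Tinv_T hT hk, one_mul]
      rw [Fin.lt_def, h2, h2]
      simp only
      grind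
    · intro i
      have a1 := sPerm_val hk i
      rw [mul_inv_rev, Equiv.Perm.mul_apply, sPerm_inv, h2]
      grind

theorem om_Tw (hT : IsDL n t T) (hTw : IsTsigma n T Tw) (σ : Equiv.Perm (Fin n)) :
    (∀ i : Fin n, (i : ℕ) + 1 = n → σ i = i) →
    ∀ f, om n (Tw ((cyc n)⁻¹ * σ * cyc n) f) = Tw σ (om n f) := by
  induction σ using perm_induction with
  | h1 =>
    intro _ f
    have : (cyc n)⁻¹ * 1 * cyc n = 1 := by group
    rw [this, hTw.1]; rfl
  | hs σ k hk ha ih =>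
    intro hf f
    have ha' := ha
    unfold Asc at ha'
    rw [Fin.lt_def] at ha'
    have hk2 : k + 2 < n := by
      by_contra hc
      have := hf ⟨k + 1, hk⟩ (by simp; omega)
      rw [Equiv.Perm.mul_apply, sPerm_r hk] at this
      rw [this] at ha'
      have := (σ ⟨k + 1, hk⟩).2
      simp only at ha'
      omega
    have hf' : ∀ i : Fin n, (i : ℕ) + 1 = n → σ i = i := by
      intro i hi
      have := hf i hi
      rw [Equiv.Perm.mul_apply] at this
      have e : sPerm n k i = i := by
        apply Fin.ext; rw [sPerm_val hk]; grind
      rwa [e] at this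
    have e : (cyc n)⁻¹ * (σ * sPerm n k) * cyc n = ((cyc n)⁻¹ * σ * cyc n) * sPerm n (k + 1) := by
      have e1 : sPerm n k * cyc n = cyc n * sPerm n (k + 1) := by
        ext i
        rw [Equiv.Perm.mul_apply, Equiv.Perm.mul_apply]
        have a1 := cyc_val (sPerm n (k + 1) i)
        have a2 := sPerm_val hk (cyc n i)
        have a3 := sPerm_val (n := n) (k := k + 1) (by omega) i
        have a4 := cyc_val i
        grind
      calc _ = (cyc n)⁻¹ * σ * (sPerm n k * cyc n) := by group
        _ = _ := by rw [e1]; group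
    have hA : Asc ((cyc n)⁻¹ * σ * cyc n) (k + 1) hk2 := by
      unfold Asc
      simp only [Equiv.Perm.mul_apply]
      have c1 : cyc n ⟨k + 1, hk⟩ = ⟨k, by omega⟩ := by
        apply Fin.ext; rw [cyc_val]; simp
      have c2 : cyc n ⟨k + 1 + 1, hk2⟩ = ⟨k + 1, by omega⟩ := by
        apply Fin.ext; rw [cyc_val]; simp
      rw [c1, c2, Fin.lt_def, cyc_inv_val, cyc_inv_val]
      have hne : ((σ ⟨k + 1, hk⟩ : Fin n) : ℕ) + 1 ≠ n := by
        intro h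
        have := hf' (σ ⟨k + 1, hk⟩) h
        have := σ.injective this
        rw [this] at h
        simp only at h
        omega
      have := (σ ⟨k + 1, hk⟩).2
      rw [if_neg (by omega), if_neg hne]
      omega
    rw [e, Tw_right hTw _ hk2 hA, Tw_right hTw _ hk ha, Module.End.mul_apply, Module.End.mul_apply,
      ih hf', om_T hT hk2]

theorem key_rel (hT : IsDL n t T) (hTw : IsTsigma n T Tw) (hn : 0 < n) :
    ∃ ρ, Tw Fin.revPerm = ((List.range (n - 1)).map T).prod * Tw ρ ∧
    ∀ f, om n (((List.range (n - 1)).map (Tinv n t T)).prod (Tw Fin.revPerm f)) = Tw ρ (om n f) := by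
  obtain ⟨ρ, h1, h2⟩ := rho_aux hTw (n - 1) (by omega)
  obtain ⟨σ, h3, h4⟩ := sigma_aux hT hTw (n - 1) (by omega)
  refine ⟨ρ, h1, ?_⟩
  intro f
  have hσ : σ = (cyc n)⁻¹ * ρ * cyc n := by
    rw [← inv_inj]
    ext i
    have a1 := cyc_val i
    have a2 := cyc_inv_val (ρ⁻¹ (cyc n i))
    have a3 := h2 (cyc n i)
    have a4 := h4 i
    simp only [mul_inv_rev, inv_inv, Equiv.Perm.mul_apply]
    grind
  rw [← Module.End.mul_apply _ (Tw Fin.revPerm)]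
  have e : n - 1 - (n - 1) = 0 := by omega
  rw [e, ← List.range_eq_range'] at h3
  rw [h3, hσ]
  apply om_Tw hT hTw
  intro i hi
  have := h2 i
  rw [← Equiv.Perm.eq_inv_iff_eq]
  apply Fin.ext
  rw [this]
  grind

section G
variable (autK : K →+* K)

theorem G_T (hat : autK t = t⁻¹) (hT : IsDL n t T) (hTw : IsTsigma n T Tw) (l : List ℕ)
    (hl : ∀ k ∈ l, k + 1 < n) (f : P n) :
    Tw Fin.revPerm (io n autK ((l.map T).prod f)) =
      (l.map (Tinv n t T)).prod (Tw Fin.revPerm (io n autK f)) := by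
  induction l with
  | nil => rfl
  | cons k l ih =>
    have hk : k + 1 < n := hl k (by simp)
    simp only [List.map_cons, List.prod_cons, Module.End.mul_apply]
    rw [io_T autK hat hT hk, ← Module.End.mul_apply, F_Tinv hT hTw (by omega), Module.End.mul_apply,
      ih (fun k hk => hl k (by simp [hk]))]
    congr 2
    omega

theorem G_Tinv (hat : autK t = t⁻¹) (hT : IsDL n t T) (hTw : IsTsigma n T Tw) (l : List ℕ)
    (hl : ∀ k ∈ l, k + 1 < n) (f : P n) :
    Tw Fin.revPerm (io n autK ((l.map (Tinv n t T)).prod f)) =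
      (l.map T).prod (Tw Fin.revPerm (io n autK f)) := by
  induction l with
  | nil => rfl
  | cons k l ih =>
    have hk : k + 1 < n := hl k (by simp)
    simp only [List.map_cons, List.prod_cons, Module.End.mul_apply]
    rw [io_Tinv autK hat hT hk, ← Module.End.mul_apply, F_T hTw (by omega), Module.End.mul_apply,
      ih (fun k hk => hl k (by simp [hk]))]
    congr 2
    omega

theorem word_inj (hT : IsDL n t T) (l : List ℕ) (hl : ∀ k ∈ l, k + 1 < n) :
    Function.Injective ((l.map T).prod) := by
  induction l with
  | nil => exact fun a b h => h
  | cons k l ih =>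
    have hk : k + 1 < n := hl k (by simp)
    rw [List.map_cons, List.prod_cons]
    intro a b h
    rw [Module.End.mul_apply, Module.End.mul_apply] at h
    apply ih (fun k hk => hl k (by simp [hk]))
    have := congrArg (Tinv n t T k) h
    rw [← Module.End.mul_apply, ← Module.End.mul_apply (Tinv n t T k), Tinv_T hT hk] at this
    exact this

theorem io_smul (c : K) (f : P n) : io n autK (c • f) = autK c • io n autK f := by
  rw [smul_eq_C_mul, map_mul, io_C, smul_eq_C_mul]

theorem Y_G_Y (haq : autK q = q⁻¹) (hat : autK t = t⁻¹) (hT : IsDL n t T) (hTw : IsTsigma n T Tw)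
    (i : Fin n) (f : P n) :
    Yop n q t T i (Tw Fin.revPerm (io n autK (Yop n q t T i f))) =
      Tw Fin.revPerm (io n autK f) := by
  obtain ⟨ρ, h1, h2⟩ := key_rel hT hTw i.pos
  have hi := i.2
  have m1 : ∀ k ∈ List.range' (i : ℕ) (n - 1 - (i : ℕ)), k + 1 < n := by
    intro k hk; rw [List.mem_range'_1] at hk; omega
  have m2 : ∀ k ∈ List.range (i : ℕ), k + 1 < n := by
    intro k hk; rw [List.mem_range] at hk; omega
  have hr : List.range (n - 1) = List.range (i : ℕ) ++ List.range' (i : ℕ) (n - 1 - (i : ℕ)) := by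
    rw [List.range_eq_range', List.range_eq_range']
    have := List.range'_append (s := 0) (m := (i : ℕ)) (n := n - 1 - (i : ℕ)) (step := 1)
    simp only [one_mul, zero_add] at this
    rw [this]
    congr 1
    omega
  have ht : t ^ (n - 1 - (i : ℕ)) ≠ 0 := pow_ne_zero _ t_ne_zero
  rw [Yop_eq T i f, io_smul, map_smul, map_smul, G_T autK hat hT hTw _ m1, Yop_eq,
    ← Module.End.mul_apply (List.map (Tinv n t T) (List.range (i : ℕ))).prod, ← List.prod_append,
    ← List.map_append, ← hr, h2, om_io_om autK haq, map_inv₀, map_pow, hat, smul_smul, inv_pow, inv_inv,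
    mul_inv_cancel₀ ht, one_smul]
  apply word_inj hT _ m2
  rw [← Module.End.mul_apply, ← List.prod_append, ← List.map_append, ← hr, ← Module.End.mul_apply, ← h1,
    G_Tinv autK hat hT hTw _ m2]

theorem G_eigen (haq : autK q = q⁻¹) (hat : autK t = t⁻¹) (hT : IsDL n t T) (hTw : IsTsigma n T Tw)
    (i : Fin n) (f : P n) (a b : ℕ) (hf : Yop n q t T i f = (q ^ a / t ^ b) • f) :
    Yop n q t T i (Tw Fin.revPerm (io n autK f)) = (q ^ a / t ^ b) • Tw Fin.revPerm (io n autK f) := by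
  have h := Y_G_Y autK haq hat hT hTw i f
  have hq := pow_ne_zero a q_ne_zero
  have ht := pow_ne_zero b t_ne_zero
  rw [hf, io_smul, map_smul, map_smul, map_div₀, map_pow, map_pow, haq, hat] at h
  rw [← h, smul_smul]
  have : q ^ a / t ^ b * (q⁻¹ ^ a / t⁻¹ ^ b) = 1 := by
    rw [inv_pow, inv_pow]; field_simp
  rw [this, one_smul, h]

end G
end
end Stmt5

namespace Stmt5

section
variable {n : ℕ}

def Qf (ν : Fin n →₀ ℕ) : ℤ := ∑ i, (ν i : ℤ) ^ 2
def Df (ν : Fin n →₀ ℕ) : ℤ := ∑ i : Fin n, ((i : ℕ) : ℤ) * (ν i : ℤ)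
def key (ν : Fin n →₀ ℕ) : ℤ ×ₗ ℤ := toLex (Qf ν, -Df ν)

theorem key_lt (ν μ : Fin n →₀ ℕ) : key ν < key μ ↔ Qf ν < Qf μ ∨ (Qf ν = Qf μ ∧ Df μ < Df ν) := by
  unfold key
  rw [Prod.Lex.toLex_lt_toLex]
  simp

noncomputable def act (σ : Equiv.Perm (Fin n)) (μ : Fin n →₀ ℕ) : Fin n →₀ ℕ := μ.mapDomain σ

theorem act_apply (σ : Equiv.Perm (Fin n)) (μ : Fin n →₀ ℕ) (i : Fin n) :
    act σ μ i = μ (σ⁻¹ i) := by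
  unfold act
  rw [Finsupp.mapDomain_equiv_apply]; rfl

theorem act_mul (σ τ : Equiv.Perm (Fin n)) (μ : Fin n →₀ ℕ) : act (σ * τ) μ = act σ (act τ μ) := by
  ext i; simp [act_apply]

theorem act_one (μ : Fin n →₀ ℕ) : act 1 μ = μ := by
  ext i; simp [act_apply]

theorem act_inj (σ : Equiv.Perm (Fin n)) : Function.Injective (act σ) :=
  Finsupp.mapDomain_injective σ.injective

theorem Qf_act (σ : Equiv.Perm (Fin n)) (μ : Fin n →₀ ℕ) : Qf (act σ μ) = Qf μ := by
  unfold Qf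
  rw [← Equiv.sum_comp σ]
  simp [act_apply]

theorem Df_act (σ : Equiv.Perm (Fin n)) (μ : Fin n →₀ ℕ) :
    Df (act σ μ) = ∑ i, (((σ i : Fin n) : ℕ) : ℤ) * (μ i : ℤ) := by
  unfold Df
  rw [← Equiv.sum_comp σ]
  simp [act_apply]

theorem Df_swap (σ : Equiv.Perm (Fin n)) (μ : Fin n →₀ ℕ) {k : ℕ} (hk : k + 1 < n) :
    Df (act σ μ) - Df (act (σ * sPerm n k) μ) =
      ((((σ ⟨k, Nat.lt_of_succ_lt hk⟩ : Fin n) : ℕ) : ℤ) - ((σ ⟨k + 1, hk⟩ : Fin n) : ℕ)) *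
      ((μ ⟨k, Nat.lt_of_succ_lt hk⟩ : ℤ) - μ ⟨k + 1, hk⟩) := by
  rw [Df_act, Df_act, ← Finset.sum_sub_distrib,
    Fintype.sum_eq_add (⟨k, Nat.lt_of_succ_lt hk⟩ : Fin n) ⟨k + 1, hk⟩]
  · rw [Equiv.Perm.mul_apply, Equiv.Perm.mul_apply, sPerm_l hk, sPerm_r hk]
    ring
  · simp
  · rintro x ⟨h1, h2⟩
    have : sPerm n k x = x := by
      apply Fin.ext; rw [sPerm_val hk]
      rw [Ne, Fin.ext_iff] at h1 h2
      simp only at h1 h2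
      rw [if_neg h1, if_neg h2]
    rw [Equiv.Perm.mul_apply, this, sub_self]

noncomputable def mon (μ : Fin n →₀ ℕ) : P n := monomial μ 1

theorem coeff_mon (μ ν : Fin n →₀ ℕ) : coeff ν (mon μ) = if μ = ν then 1 else 0 := by
  unfold mon; rw [coeff_monomial]

theorem sum_mon (p : P n) : p = ∑ l ∈ p.support, coeff l p • mon l := by
  conv_lhs => rw [p.as_sum]
  refine Finset.sum_congr rfl fun l _ => ?_
  rw [mon, smul_monomial, smul_eq_mul, mul_one]

/-- polynomials with all exponents of smaller key -/
def Low (μ : Fin n →₀ ℕ) : Submodule K (P n) where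
  carrier := {p | ∀ l, ¬ key l < key μ → coeff l p = 0}
  add_mem' := by
    intro a b ha hb l hl
    rw [coeff_add, ha l hl, hb l hl, add_zero]
  zero_mem' := by intro l _; simp
  smul_mem' := by
    intro c a ha l hl
    rw [coeff_smul, ha l hl, smul_zero]

theorem mem_Low (μ : Fin n →₀ ℕ) (p : P n) :
    p ∈ Low μ ↔ ∀ l, ¬ key l < key μ → coeff l p = 0 := Iff.rfl

theorem mon_mem_Low {μ ν : Fin n →₀ ℕ} (h : key μ < key ν) : mon μ ∈ Low ν := by
  intro l hl
  rw [coeff_mon, if_neg]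
  rintro rfl
  exact hl h

theorem Low_mono {μ ν : Fin n →₀ ℕ} (h : key μ ≤ key ν) : Low μ ≤ Low ν := by
  intro p hp l hl
  exact hp l (fun h' => hl (h'.trans_le h))

/-- polynomials with all exponents of smaller square norm -/
def LowQ (μ : Fin n →₀ ℕ) : Submodule K (P n) where
  carrier := {p | ∀ l, ¬ Qf l < Qf μ → coeff l p = 0}
  add_mem' := by
    intro a b ha hb l hl
    rw [coeff_add, ha l hl, hb l hl, add_zero]
  zero_mem' := by intro l _; simp
  smul_mem' := by
    intro c a ha l hl
    rw [coeff_smul, ha l hl, smul_zero]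

theorem mon_mem_LowQ {μ ν : Fin n →₀ ℕ} (h : Qf μ < Qf ν) : mon μ ∈ LowQ ν := by
  intro l hl
  rw [coeff_mon, if_neg]
  rintro rfl
  exact hl h

def Tri (A : P n →ₗ[K] P n) (σ : Equiv.Perm (Fin n)) (c : (Fin n →₀ ℕ) → K) : Prop :=
  ∀ μ, A (mon μ) - c μ • mon (act σ μ) ∈ Low (act σ μ)

theorem Tri_low {A : P n →ₗ[K] P n} {σ : Equiv.Perm (Fin n)} {c : (Fin n →₀ ℕ) → K}
    (h : Tri A σ c) {l ν : Fin n →₀ ℕ} (hl : key (act σ l) < key ν) : A (mon l) ∈ Low ν := by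
  have h1 := Low_mono hl.le (h l)
  have h2 := Submodule.smul_mem _ (c l) (mon_mem_Low hl)
  simpa using Submodule.add_mem _ h1 h2

theorem Tri_step {A B : P n →ₗ[K] P n} {σ : Equiv.Perm (Fin n)} {c : (Fin n →₀ ℕ) → K}
    (h : Tri A σ c) {k : ℕ} (hk : k + 1 < n) (a b : (Fin n →₀ ℕ) → K)
    (hB : ∀ μ, ∃ r ∈ LowQ μ, B (mon μ) = a μ • mon (act (sPerm n k) μ) + b μ • mon μ + r)
    (hb : ∀ μ, b μ ≠ 0 → 0 < ((((σ ⟨k, Nat.lt_of_succ_lt hk⟩ : Fin n) : ℕ) : ℤ) -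
        ((σ ⟨k + 1, hk⟩ : Fin n) : ℕ)) *
      ((μ ⟨k, Nat.lt_of_succ_lt hk⟩ : ℤ) - μ ⟨k + 1, hk⟩)) :
    Tri (A * B) (σ * sPerm n k) (fun μ => c (act (sPerm n k) μ) * a μ) := by
  intro μ
  obtain ⟨r, hr, e⟩ := hB μ
  rw [Module.End.mul_apply, e, map_add, map_add, map_smul, map_smul]
  have h1 := Submodule.smul_mem _ (a μ) (h (act (sPerm n k) μ))
  rw [← act_mul] at h1
  have h2 : b μ • A (mon μ) ∈ Low (act (σ * sPerm n k) μ) := by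
    by_cases hb0 : b μ = 0
    · rw [hb0, zero_smul]; exact Submodule.zero_mem _
    · apply Submodule.smul_mem
      apply Tri_low h
      rw [key_lt]; right
      refine ⟨by rw [Qf_act, Qf_act], ?_⟩
      have := hb μ hb0
      rw [← Df_swap σ μ hk] at this
      linarith
  have h3 : A r ∈ Low (act (σ * sPerm n k) μ) := by
    rw [sum_mon r, map_sum]
    apply Submodule.sum_mem
    intro l hl
    rw [map_smul]
    apply Submodule.smul_mem
    apply Tri_low h
    rw [key_lt]; left
    rw [Qf_act, Qf_act]
    by_contra hc
    exact (mem_support_iff.mp hl) (hr l hc)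
  have := Submodule.add_mem _ (Submodule.add_mem _ h1 h2) h3
  convert this using 1
  rw [smul_sub, smul_smul, mul_comm (a μ)]
  abel

theorem Tri_coeff {A : P n →ₗ[K] P n} {σ : Equiv.Perm (Fin n)} {c : (Fin n →₀ ℕ) → K}
    (h : Tri A σ c) (p : P n) (ν : Fin n →₀ ℕ)
    (hν : ∀ l ∈ p.support, l ≠ ν → ¬ key (act σ ν) < key (act σ l)) :
    coeff (act σ ν) (A p) = c ν * coeff ν p := by
  have key1 : ∀ l ∈ p.support, coeff (act σ ν) (A (coeff l p • mon l)) =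
      if l = ν then c ν * coeff ν p else 0 := by
    intro l hl
    have h1 : ¬ key (act σ ν) < key (act σ l) := by
      by_cases e : l = ν
      · rw [e]; exact lt_irrefl _
      · exact hν l hl e
    have h2 := h l _ h1
    rw [coeff_sub, sub_eq_zero, coeff_smul, coeff_mon] at h2
    rw [map_smul, coeff_smul, h2]
    by_cases e : l = ν
    · subst e; simp [mul_comm]
    · rw [if_neg e, if_neg (fun h => e (act_inj σ h))]; simp
  conv_lhs => rw [sum_mon p, map_sum, coeff_sum]
  rw [Finset.sum_congr rfl key1, Finset.sum_ite_eq']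
  split_ifs with hs
  · rfl
  · rw [notMem_support_iff.mp hs, mul_zero]

theorem rename_mon (σ : Equiv.Perm (Fin n)) (μ : Fin n →₀ ℕ) : rename σ (mon μ) = mon (act σ μ) := by
  unfold mon act
  rw [rename_monomial]

theorem mon_mul (μ ν : Fin n →₀ ℕ) : mon μ * mon ν = mon (μ + ν) := by
  unfold mon; rw [monomial_mul, one_mul]

theorem X_pow_mon (i : Fin n) (a : ℕ) : (X i : P n) ^ a = mon (Finsupp.single i a) := by
  unfold mon; rw [X_pow_eq_monomial]

theorem Qf_add (ρ : Fin n →₀ ℕ) {u v : Fin n} (huv : u ≠ v) (a b : ℕ) :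
    Qf (ρ + Finsupp.single u a + Finsupp.single v b) =
      Qf ρ + (2 * ρ u * a + a ^ 2) + (2 * ρ v * b + b ^ 2) := by
  unfold Qf
  have : ∀ i, (((ρ + Finsupp.single u a + Finsupp.single v b) i : ℕ) : ℤ) ^ 2 =
      (ρ i : ℤ) ^ 2 + (if u = i then (2 * (ρ i : ℤ) * a + a ^ 2) else 0)
        + (if v = i then (2 * (ρ i : ℤ) * b + b ^ 2) else 0) := by
    intro i
    simp only [Finsupp.add_apply, Finsupp.single_apply]
    by_cases h1 : u = i
    · have h2 : v ≠ i := by rw [← h1]; exact huv.symm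
      rw [if_pos h1, if_pos h1, if_neg h2, if_neg h2]; push_cast; ring
    · by_cases h2 : v = i
      · rw [if_neg h1, if_neg h1, if_pos h2, if_pos h2]; push_cast; ring
      · rw [if_neg h1, if_neg h1, if_neg h2, if_neg h2]; push_cast; ring
  simp only [this, Finset.sum_add_distrib, Finset.sum_ite_eq, mem_univ, if_true]

end
section
variable {n : ℕ} {T : ℕ → P n →ₗ[K] P n}

theorem mid_mem (ρ : Fin n →₀ ℕ) {u v : Fin n} (huv : u ≠ v) (hρ : ρ u = ρ v) (e : ℕ)
    (μ : Fin n →₀ ℕ) (hμ : Qf μ = Qf ρ + 2 * ρ u * (e + 1 : ℕ) + ((e + 1 : ℕ) : ℤ) ^ 2) :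
    mon ρ * ((X u * X v) * ∑ i ∈ range e, (X u : P n) ^ i * X v ^ (e - 1 - i)) ∈ LowQ μ := by
  rw [Finset.mul_sum, Finset.mul_sum]
  apply Submodule.sum_mem
  intro i hi
  have hi := Finset.mem_range.mp hi
  have : mon ρ * ((X u * X v) * ((X u : P n) ^ i * X v ^ (e - 1 - i))) =
      mon (ρ + Finsupp.single u (i + 1) + Finsupp.single v (e - i)) := by
    rw [← mon_mul, ← mon_mul, ← X_pow_mon, ← X_pow_mon]
    have : e - i = e - 1 - i + 1 := by omega
    rw [this]; ring
  rw [this]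
  apply mon_mem_LowQ
  rw [Qf_add _ huv, hμ, ← hρ]
  obtain ⟨j, rfl⟩ : ∃ j, e = i + 1 + j := ⟨e - i - 1, by omega⟩
  have : i + 1 + j - i = j + 1 := by omega
  rw [this]
  push_cast
  nlinarith [mul_nonneg (Int.natCast_nonneg i) (Int.natCast_nonneg j)]

theorem T_mon (hT : IsDL n t T) {k : ℕ} (hk : k + 1 < n) (μ : Fin n →₀ ℕ) :
    ∃ r ∈ LowQ μ, T k (mon μ) =
      (if μ ⟨k, Nat.lt_of_succ_lt hk⟩ ≤ μ ⟨k + 1, hk⟩ then t else 1) • mon (act (sPerm n k) μ) +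
      (if μ ⟨k, Nat.lt_of_succ_lt hk⟩ < μ ⟨k + 1, hk⟩ then t - 1 else 0) • mon μ + r := by
  set u : Fin n := ⟨k, Nat.lt_of_succ_lt hk⟩ with hu
  set v : Fin n := ⟨k + 1, hk⟩ with hv
  have huv : u ≠ v := by simp [hu, hv]
  have su : sPerm n k u = v := sPerm_l hk
  have sv : sPerm n k v = u := sPerm_r hk
  have sother : ∀ i, i ≠ u → i ≠ v → sPerm n k i = i := by
    intro i h1 h2
    apply Fin.ext; rw [sPerm_val hk]
    rw [Ne, Fin.ext_iff] at h1 h2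
    rw [if_neg h1, if_neg h2]
  have sinv : ∀ ρ : Fin n →₀ ℕ, ρ u = ρ v → act (sPerm n k) ρ = ρ := by
    intro ρ h
    ext i
    rw [act_apply, sPerm_inv]
    by_cases h1 : i = u
    · rw [h1, su, h]
    · by_cases h2 : i = v
      · rw [h2, sv, h]
      · rw [sother i h1 h2]
  rcases lt_trichotomy (μ u) (μ v) with h | h | h
  · -- μ u < μ v
    obtain ⟨e, he⟩ : ∃ e, μ v = μ u + (e + 1) := ⟨μ v - μ u - 1, by omega⟩
    set ρ : Fin n →₀ ℕ := μ - Finsupp.single v (e + 1) with hρ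
    have e1 : μ = ρ + Finsupp.single v (e + 1) := by
      rw [hρ, tsub_add_cancel_of_le]
      rw [Finsupp.single_le_iff]; omega
    have r1 : ρ u = ρ v := by
      rw [hρ]; simp only [Finsupp.tsub_apply, Finsupp.single_apply]
      simp only [if_neg huv.symm, if_true]; omega
    have m1 : mon μ = mon ρ * X v ^ (e + 1) := by
      rw [X_pow_mon, mon_mul, ← e1]
    have m2 : mon (act (sPerm n k) μ) = mon ρ * X u ^ (e + 1) := by
      rw [← rename_mon, m1, map_mul, rename_mon, sinv ρ r1, map_pow, rename_X, sv]
    refine ⟨(t - 1) • (mon ρ * ((X u * X v) * ∑ i ∈ range e, (X u : P n) ^ i * X v ^ (e - 1 - i))),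
      ?_, ?_⟩
    · apply Submodule.smul_mem
      apply mid_mem ρ huv r1
      have := Qf_add ρ huv 0 (e + 1)
      rw [Finsupp.single_zero, add_zero, ← e1] at this
      rw [this, r1]; push_cast; ring
    · rw [if_pos h.le, if_pos h]
      apply T_eq hT hk
      rw [rename_mon, m2, m1]
      have hg := Commute.geom_sum₂_mul (Commute.all (X u : P n) (X v)) e
      simp only [smul_eq_C_mul, map_sub, map_one]
      simp only [← hu, ← hv]
      linear_combination (C t - 1) * mon ρ * X u * X v * hg
  · refine ⟨0, Submodule.zero_mem _, ?_⟩
    rw [if_pos h.le, if_neg (by omega), sinv μ h, zero_smul, add_zero, add_zero]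
    apply T_eq hT hk
    rw [rename_mon, sinv μ h, smul_eq_C_mul]
    ring
  · obtain ⟨e, he⟩ : ∃ e, μ u = μ v + (e + 1) := ⟨μ u - μ v - 1, by omega⟩
    set ρ : Fin n →₀ ℕ := μ - Finsupp.single u (e + 1) with hρ
    have e1 : μ = ρ + Finsupp.single u (e + 1) := by
      rw [hρ, tsub_add_cancel_of_le]
      rw [Finsupp.single_le_iff]; omega
    have r1 : ρ u = ρ v := by
      rw [hρ]; simp only [Finsupp.tsub_apply, Finsupp.single_apply]
      simp only [if_neg huv, if_true]; omega
    have m1 : mon μ = mon ρ * X u ^ (e + 1) := by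
      rw [X_pow_mon, mon_mul, ← e1]
    have m2 : mon (act (sPerm n k) μ) = mon ρ * X v ^ (e + 1) := by
      rw [← rename_mon, m1, map_mul, rename_mon, sinv ρ r1, map_pow, rename_X, su]
    refine ⟨(1 - t) • (mon ρ * ((X u * X v) * ∑ i ∈ range e, (X u : P n) ^ i * X v ^ (e - 1 - i))),
      ?_, ?_⟩
    · apply Submodule.smul_mem
      apply mid_mem ρ huv r1
      have := Qf_add ρ huv (e + 1) 0
      rw [Finsupp.single_zero, add_zero, ← e1] at this
      rw [this]; push_cast; ring
    · rw [if_neg (by omega), if_neg (by omega)]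
      apply T_eq hT hk
      rw [rename_mon, m2, m1]
      have hg := Commute.geom_sum₂_mul (Commute.all (X u : P n) (X v)) e
      simp only [smul_eq_C_mul, map_sub, map_one, map_zero]
      simp only [← hu, ← hv]
      linear_combination (1 - C t) * mon ρ * X u * X v * hg

theorem Tinv_mon (hT : IsDL n t T) {k : ℕ} (hk : k + 1 < n) (μ : Fin n →₀ ℕ) :
    ∃ r ∈ LowQ μ, Tinv n t T k (mon μ) =
      (if μ ⟨k + 1, hk⟩ ≤ μ ⟨k, Nat.lt_of_succ_lt hk⟩ then t⁻¹ else 1) • mon (act (sPerm n k) μ) +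
      (if μ ⟨k + 1, hk⟩ < μ ⟨k, Nat.lt_of_succ_lt hk⟩ then t⁻¹ - 1 else 0) • mon μ + r := by
  obtain ⟨r, hr, e⟩ := T_mon hT hk μ
  refine ⟨t⁻¹ • r, Submodule.smul_mem _ _ hr, ?_⟩
  have ht : t⁻¹ * t = 1 := inv_mul_cancel₀ t_ne_zero
  have hc := Ct (n := n)
  rw [Tinv_apply, e]
  simp only [smul_eq_C_mul]
  rcases lt_trichotomy (μ ⟨k, Nat.lt_of_succ_lt hk⟩) (μ ⟨k + 1, hk⟩) with h | h | h
  · rw [if_pos h.le, if_pos h, if_neg (by omega), if_neg (by omega)]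
    simp only [map_sub, map_one, map_zero]
    linear_combination (mon (act (sPerm n k) μ) + mon μ) * hc
  · have hs : act (sPerm n k) μ = μ := by
      ext i
      rw [act_apply, sPerm_inv]
      by_cases h1 : i = ⟨k, Nat.lt_of_succ_lt hk⟩
      · rw [h1, sPerm_l hk, h]
      · by_cases h2 : i = ⟨k + 1, hk⟩
        · rw [h2, sPerm_r hk, h]
        · congr 1
          apply Fin.ext; rw [sPerm_val hk]
          rw [Fin.ext_iff] at h1 h2
          rw [if_neg h1, if_neg h2]
    rw [if_pos h.le, if_neg (by omega), if_pos h.ge, if_neg (by omega), hs]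
    simp only [map_zero]
    linear_combination (mon μ) * hc
  · rw [if_neg (by omega), if_neg (by omega), if_pos h.le, if_pos h]
    simp only [map_sub, map_one, map_zero]
    ring

theorem Tri_T (hT : IsDL n t T) {A : P n →ₗ[K] P n} {σ : Equiv.Perm (Fin n)} {c : (Fin n →₀ ℕ) → K}
    (h : Tri A σ c) {k : ℕ} (hk : k + 1 < n) (ha : Asc σ k hk) :
    Tri (A * T k) (σ * sPerm n k) (fun μ => c (act (sPerm n k) μ) *
      (if μ ⟨k, Nat.lt_of_succ_lt hk⟩ ≤ μ ⟨k + 1, hk⟩ then t else 1)) := by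
  refine Tri_step h hk _ _ (T_mon hT hk) ?_
  intro μ hμ
  split_ifs at hμ with h1
  · unfold Asc at ha
    rw [Fin.lt_def] at ha
    apply mul_pos_of_neg_of_neg <;> omega
  · exact absurd rfl hμ

theorem Tri_Tinv (hT : IsDL n t T) {A : P n →ₗ[K] P n} {σ : Equiv.Perm (Fin n)}
    {c : (Fin n →₀ ℕ) → K}
    (h : Tri A σ c) {k : ℕ} (hk : k + 1 < n)
    (ha : σ ⟨k + 1, hk⟩ < σ ⟨k, Nat.lt_of_succ_lt hk⟩) :
    Tri (A * Tinv n t T k) (σ * sPerm n k) (fun μ => c (act (sPerm n k) μ) *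
      (if μ ⟨k + 1, hk⟩ ≤ μ ⟨k, Nat.lt_of_succ_lt hk⟩ then t⁻¹ else 1)) := by
  refine Tri_step h hk _ _ (Tinv_mon hT hk) ?_
  intro μ hμ
  split_ifs at hμ with h1
  · rw [Fin.lt_def] at ha
    apply mul_pos <;> omega
  · exact absurd rfl hμ

theorem om_mon (i0 : Fin n) (h0 : (i0 : ℕ) = 0) (μ : Fin n →₀ ℕ) :
    om n (mon μ) = q ^ μ i0 • mon (act (cyc n) μ) := by
  unfold om
  rw [AlgHom.comp_apply, mon, aeval_monomial, map_one, one_mul, Finsupp.prod_fintype _ _ (by simp)]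
  have e : ∀ i : Fin n, (if (i : ℕ) = 0 then C q * X i else X i : P n) ^ μ i =
      (if i = i0 then C (q ^ μ i0) else 1) * X i ^ μ i := by
    intro i
    by_cases h : i = i0
    · rw [if_pos h, h, if_pos h0, mul_pow, map_pow]
    · have : ¬ (i : ℕ) = 0 := by intro h'; apply h; ext; omega
      rw [if_neg h, if_neg this, one_mul]
  rw [Finset.prod_congr rfl (fun i _ => e i), Finset.prod_mul_distrib, Finset.prod_ite_eq']
  simp only [mem_univ, if_true, map_mul, rename_C]
  rw [smul_eq_C_mul, ← rename_mon]
  congr 2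
  rw [mon, monomial_eq, map_one, one_mul, Finsupp.prod_fintype _ _ (by simp)]

theorem Tri_om {A : P n →ₗ[K] P n} {σ : Equiv.Perm (Fin n)} {c : (Fin n →₀ ℕ) → K}
    (h : Tri A σ c) (i0 : Fin n) (h0 : (i0 : ℕ) = 0) :
    Tri (A * (om n).toLinearMap) (σ * cyc n) (fun μ => q ^ μ i0 * c (act (cyc n) μ)) := by
  intro μ
  rw [Module.End.mul_apply, AlgHom.toLinearMap_apply, om_mon i0 h0, map_smul, mul_smul, ← smul_sub,
    act_mul]
  exact Submodule.smul_mem _ _ (h _)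

end
end Stmt5

namespace Stmt5

section
variable {n : ℕ} {T : ℕ → P n →ₗ[K] P n}

theorem Y_stage1 (hT : IsDL n t T) (i : Fin n) (j : ℕ) (hj : (i : ℕ) + j < n) :
    ∃ σ : Equiv.Perm (Fin n), ∃ z : (Fin n →₀ ℕ) → ℤ,
      Tri ((List.range' (i : ℕ) j).map T).prod σ (fun μ => t ^ z μ) ∧
      ∀ m : Fin n, ((σ m : Fin n) : ℕ) = if (m : ℕ) < i then (m : ℕ) else if (m : ℕ) < i + j then (m : ℕ) + 1
        else if (m : ℕ) = i + j then (i : ℕ) else (m : ℕ) := by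
  induction j with
  | zero =>
    refine ⟨1, fun _ => 0, ?_, ?_⟩
    · intro μ
      simp [act_one]
    · intro m
      simp only [Equiv.Perm.one_apply]
      split_ifs <;> omega
  | succ j ih =>
    obtain ⟨σ, z, h1, h2⟩ := ih (by omega)
    have hk : (i : ℕ) + j + 1 < n := by omega
    have ha : Asc σ ((i : ℕ) + j) hk := by
      unfold Asc
      rw [Fin.lt_def, h2, h2]
      simp only
      split_ifs <;> omega
    have h3 := Tri_T hT h1 hk ha
    refine ⟨σ * sPerm n ((i : ℕ) + j), fun μ => z (act (sPerm n ((i : ℕ) + j)) μ) +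
      (if μ ⟨(i : ℕ) + j, Nat.lt_of_succ_lt hk⟩ ≤ μ ⟨(i : ℕ) + j + 1, hk⟩ then 1 else 0), ?_, ?_⟩
    · rw [List.range'_1_concat, List.map_append, List.prod_append]
      simp only [List.map_cons, List.map_nil, List.prod_cons, List.prod_nil, mul_one]
      convert h3 using 2 with μ
      rw [zpow_add₀ t_ne_zero]
      split_ifs <;> simp
    · intro m
      have a1 := sPerm_val hk m
      rw [Equiv.Perm.mul_apply, h2]
      grind

theorem Y_stage2 (hT : IsDL n t T) (i : Fin n) (j : ℕ) (hj : j ≤ (i : ℕ)) :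
    ∃ σ : Equiv.Perm (Fin n), ∃ z : (Fin n →₀ ℕ) → ℤ,
      Tri (((List.range' (i : ℕ) (n - 1 - (i : ℕ))).map T).prod * (om n).toLinearMap *
        ((List.range j).map (Tinv n t T)).prod) σ (fun μ => q ^ (μ (σ⁻¹ i)) * t ^ z μ) ∧
      ∀ m : Fin n, ((σ m : Fin n) : ℕ) = if (m : ℕ) < j then (m : ℕ) else if (m : ℕ) = j then (i : ℕ)
        else if (m : ℕ) ≤ i then (m : ℕ) - 1 else (m : ℕ) := by
  have hi := i.2
  induction j with
  | zero =>
    obtain ⟨σ, z, h1, h2⟩ := Y_stage1 hT i (n - 1 - (i : ℕ)) (by omega)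
    have hv : ∀ m : Fin n, (((σ * cyc n) m : Fin n) : ℕ) = if (m : ℕ) < 0 then (m : ℕ) else if (m : ℕ) = 0 then (i : ℕ)
        else if (m : ℕ) ≤ i then (m : ℕ) - 1 else (m : ℕ) := by
      intro m
      have a1 := cyc_val m
      rw [Equiv.Perm.mul_apply, h2]
      grind
    refine ⟨σ * cyc n, fun μ => z (act (cyc n) μ), ?_, hv⟩
    have h3 := Tri_om h1 ⟨0, i.pos⟩ rfl
    have e : (σ * cyc n)⁻¹ i = ⟨0, i.pos⟩ := by
      rw [Equiv.Perm.inv_eq_iff_eq]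
      apply Fin.ext; rw [hv]; simp
    simp only [List.range_zero, List.map_nil, List.prod_nil, mul_one, e]
    exact h3
  | succ j ih =>
    obtain ⟨σ, z, h1, h2⟩ := ih (by omega)
    have hk : j + 1 < n := by omega
    have ha : σ ⟨j + 1, hk⟩ < σ ⟨j, Nat.lt_of_succ_lt hk⟩ := by
      rw [Fin.lt_def, h2, h2]
      simp only
      split_ifs <;> omega
    have h3 := Tri_Tinv hT h1 hk ha
    refine ⟨σ * sPerm n j, fun μ => z (act (sPerm n j) μ) +
      (if μ ⟨j + 1, hk⟩ ≤ μ ⟨j, Nat.lt_of_succ_lt hk⟩ then -1 else 0), ?_, ?_⟩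
    · rw [List.range_succ, List.map_append, List.prod_append]
      simp only [List.map_cons, List.map_nil, List.prod_cons, List.prod_nil, mul_one]
      rw [← mul_assoc]
      convert h3 using 2 with μ
      rw [zpow_add₀ t_ne_zero, act_apply, mul_inv_rev, sPerm_inv, Equiv.Perm.mul_apply, mul_assoc]
      congr 2
      split_ifs <;> simp
    · intro m
      have a1 := sPerm_val hk m
      rw [Equiv.Perm.mul_apply, h2]
      grind

theorem Y_tri (hT : IsDL n t T) (i : Fin n) : ∃ z : (Fin n →₀ ℕ) → ℤ,
    Tri (Yop n q t T i) 1 (fun μ => q ^ (μ i) * t ^ z μ) := by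
  obtain ⟨σ, z, h1, h2⟩ := Y_stage2 hT i i le_rfl
  have hσ : σ = 1 := by
    ext m
    rw [h2, Equiv.Perm.one_apply]
    grind
  subst hσ
  refine ⟨fun μ => z μ - (n - 1 - (i : ℕ) : ℕ), ?_⟩
  intro μ
  have := Submodule.smul_mem _ (t ^ (n - 1 - (i : ℕ)))⁻¹ (h1 μ)
  rw [smul_sub, smul_smul] at this
  rw [Yop_eq]
  convert this using 3
  · rfl
  · beta_reduce
    rw [zpow_sub₀ t_ne_zero]
    simp only [inv_one, Equiv.Perm.one_apply, zpow_natCast]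
    rw [div_eq_mul_inv]
    ring

theorem unique_zero (hT : IsDL n t T) (η : Fin n →₀ ℕ) (b : Fin n → ℕ) (g : P n)
    (hg : ∀ i, Yop n q t T i g = (q ^ η i / t ^ b i) • g) (h0 : coeff η g = 0) : g = 0 := by
  by_contra hne
  have hs : g.support.Nonempty := by
    rw [Finset.nonempty_iff_ne_empty, Ne, MvPolynomial.support_eq_empty]; exact hne
  obtain ⟨ν, hν, hmax⟩ := Finset.exists_max_image g.support key hs
  have hν0 := mem_support_iff.mp hν
  have : ν = η := by
    ext i
    obtain ⟨z, hz⟩ := Y_tri hT i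
    have h1 := Tri_coeff hz g ν (by
      intro l hl _
      rw [act_one, act_one]
      exact not_lt.mpr (hmax l hl))
    rw [act_one, hg, coeff_smul, smul_eq_mul] at h1
    have h2 := mul_right_cancel₀ hν0 h1
    symm
    apply qt_zpow (m := -(b i : ℤ)) (l := z ν)
    rw [← h2, zpow_neg, zpow_natCast, div_eq_mul_inv]
  rw [this] at hν0
  exact hν0 h0

theorem Tw_tri {Tw : Equiv.Perm (Fin n) → P n →ₗ[K] P n} (hT : IsDL n t T) (hTw : IsTsigma n T Tw)
    (σ : Equiv.Perm (Fin n)) :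
    Tri (Tw σ) σ (fun μ => t ^ ((invSet σ).filter fun p => μ p.1 ≤ μ p.2).card) := by
  induction σ using perm_induction with
  | h1 =>
    intro μ
    have : invSet (1 : Equiv.Perm (Fin n)) = ∅ := by
      ext ⟨a, b⟩
      rw [mem_invSet]
      simp only [Equiv.Perm.one_apply, notMem_empty, iff_false, not_and, not_lt]
      exact fun h => h.le
    rw [hTw.1, this]
    simp [act_one]
  | hs σ k hk ha ih =>
    have h := Tri_T hT ih hk ha
    rw [Tw_right hTw σ hk ha]
    convert h using 2 with μ
    rw [invSet_mul hk σ ha, filter_insert, filter_map, ]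
    have e : ((invSet σ).filter ((fun p : Fin n × Fin n => μ p.1 ≤ μ p.2) ∘
        ⇑((sPerm n k).prodCongr (sPerm n k)).toEmbedding)) =
        (invSet σ).filter (fun p => act (sPerm n k) μ p.1 ≤ act (sPerm n k) μ p.2) := by
      apply filter_congr
      intro p _
      simp [act_apply, sPerm_inv]
    split_ifs with h1
    · rw [card_insert_of_notMem, card_map, e, pow_succ]
      intro hmem
      apply notMem_aux hk σ
      exact (Finset.map_subset_map.mpr (filter_subset _ _)) hmem
    · rw [card_map, e, mul_one]

end

section order
variable {n : ℕ}

theorem lower_sum (a : Fin n → ℤ) (ha : ∀ p : Fin n, 0 ≤ ∑ i ∈ univ.filter (· ≤ p), a i)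
    (S : Finset (Fin n)) (hS : ∀ i j, i ≤ j → j ∈ S → i ∈ S) : 0 ≤ ∑ i ∈ S, a i := by
  rcases S.eq_empty_or_nonempty with h | h
  · simp [h]
  · have : S = univ.filter (· ≤ S.max' h) := by
      ext i
      simp only [mem_filter, mem_univ, true_and]
      exact ⟨fun hi => S.le_max' i hi, fun hi => hS _ _ hi (S.max'_mem h)⟩
    rw [this]; exact ha _

theorem abel (a : Fin n → ℤ) (ha : ∀ p : Fin n, 0 ≤ ∑ i ∈ univ.filter (· ≤ p), a i)
    (w : Fin n → ℕ) (hw : Antitone w) : 0 ≤ ∑ i, (w i : ℤ) * a i := by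
  set M := ∑ i, w i with hM
  have e : ∀ i, (w i : ℤ) * a i = ∑ m ∈ range M, if m < w i then a i else 0 := by
    intro i
    have hi : w i ≤ M := Finset.single_le_sum (f := w) (fun _ _ => Nat.zero_le _) (mem_univ i)
    rw [← Finset.sum_filter, Finset.sum_const]
    have : (range M).filter (fun m => m < w i) = range (w i) := by
      ext m; simp only [mem_filter, Finset.mem_range]; omega
    rw [this, card_range]; simp
  rw [Finset.sum_congr rfl (fun i _ => e i), Finset.sum_comm]
  apply Finset.sum_nonneg
  intro m _
  rw [← Finset.sum_filter]
  apply lower_sum a ha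
  intro i j hij hj
  simp only [mem_filter, mem_univ, true_and] at hj ⊢
  exact lt_of_lt_of_le hj (hw hij)

theorem sq_lt {ν μ : Fin n → ℕ} (hν : Antitone ν) (h : domLT n ν μ) :
    ∑ i, (ν i : ℤ) ^ 2 < ∑ i, (μ i : ℤ) ^ 2 := by
  obtain ⟨⟨_, h2⟩, hne⟩ := h
  have h3 := abel (fun i => (μ i : ℤ) - ν i) (by
    intro p
    rw [Finset.sum_sub_distrib]
    have := h2 p
    have : (∑ i ∈ univ.filter (· ≤ p), (ν i : ℤ)) ≤ ∑ i ∈ univ.filter (· ≤ p), (μ i : ℤ) := by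
      exact_mod_cast this
    linarith) ν hν
  have h4 : 0 < ∑ i, ((μ i : ℤ) - ν i) ^ 2 := by
    obtain ⟨i, hi⟩ := Function.ne_iff.mp hne
    apply Finset.sum_pos'
    · intro i _; positivity
    · refine ⟨i, mem_univ i, ?_⟩
      have hne' : (μ i : ℤ) - ν i ≠ 0 := by
        intro h
        apply hi
        omega
      positivity
  have h5 : ∑ i, (μ i : ℤ) ^ 2 = ∑ i, (ν i : ℤ) ^ 2 + 2 * ∑ i, (ν i : ℤ) * ((μ i : ℤ) - ν i)
      + ∑ i, ((μ i : ℤ) - ν i) ^ 2 := by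
    rw [Finset.mul_sum, ← Finset.sum_add_distrib, ← Finset.sum_add_distrib]
    exact Finset.sum_congr rfl fun i _ => by ring
  linarith

theorem D_lt {ν μ : Fin n → ℕ} (h : domLT n ν μ) :
    ∑ i : Fin n, ((i : ℕ) : ℤ) * (μ i : ℤ) < ∑ i : Fin n, ((i : ℕ) : ℤ) * (ν i : ℤ) := by
  obtain ⟨⟨h1, h2⟩, hne⟩ := h
  have key1 : ∀ f : Fin n → ℕ, (∑ p : Fin n, ((∑ i ∈ univ.filter (· ≤ p), f i : ℕ) : ℤ)) =
      n * ((∑ i, f i : ℕ) : ℤ) - ∑ i : Fin n, ((i : ℕ) : ℤ) * (f i : ℤ) := by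
    intro f
    push_cast
    simp only [Finset.sum_filter]
    rw [Finset.sum_comm, Finset.mul_sum, ← Finset.sum_sub_distrib]
    refine Finset.sum_congr rfl fun i _ => ?_
    rw [← Finset.sum_filter, Finset.sum_const]
    have : (univ.filter (fun p : Fin n => i ≤ p)).card = n - i := by
      have := Fin.card_Ici i
      rw [← this]; congr 1; ext; simp
    rw [this, nsmul_eq_mul, Nat.cast_sub i.2.le]
    ring
  have h3 : (∑ p : Fin n, ((∑ i ∈ univ.filter (· ≤ p), ν i : ℕ) : ℤ)) <
      ∑ p : Fin n, ((∑ i ∈ univ.filter (· ≤ p), μ i : ℕ) : ℤ) := by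
    apply Finset.sum_lt_sum
    · intro p _; exact_mod_cast h2 p
    · by_contra hc
      push Not at hc
      apply hne
      have h4 : ∀ p : Fin n, ∑ i ∈ univ.filter (· ≤ p), ν i = ∑ i ∈ univ.filter (· ≤ p), μ i := by
        intro p
        apply le_antisymm (h2 p)
        exact_mod_cast hc p (mem_univ p)
      funext i
      have hi : ∀ f : Fin n → ℕ, ∑ j ∈ univ.filter (· ≤ i), f j = f i + ∑ j ∈ univ.filter (· < i), f j := by
        intro f
        have : univ.filter (· ≤ i) = insert i (univ.filter (· < i)) := by
          ext j; simp [le_iff_eq_or_lt]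
        rw [this, Finset.sum_insert (by simp)]
      have hlt : ∑ j ∈ univ.filter (· < i), ν j = ∑ j ∈ univ.filter (· < i), μ j := by
        by_cases h0 : (i : ℕ) = 0
        · have : univ.filter (· < i) = (∅ : Finset (Fin n)) := by
            ext j; simp [Fin.lt_def, h0]
          rw [this]; simp
        · have : univ.filter (· < i) = univ.filter (fun j : Fin n => j ≤ ⟨(i : ℕ) - 1, by omega⟩) := by
            ext j; simp only [mem_filter, mem_univ, true_and, Fin.lt_def, Fin.le_def]; omega
          rw [this]; exact h4 _
      have := h4 i
      rw [hi, hi, hlt] at this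
      omega
  rw [key1, key1, h1] at h3
  linarith

theorem sortDesc_sq (ν : Fin n → ℕ) : ∑ i, (sortDesc n ν i : ℤ) ^ 2 = ∑ i, (ν i : ℤ) ^ 2 := by
  unfold sortDesc
  exact Equiv.sum_comp (Fin.revPerm.trans (Tuple.sort ν)) (fun i => (ν i : ℤ) ^ 2)

theorem sortDesc_anti (ν : Fin n → ℕ) : Antitone (sortDesc n ν) := by
  intro i j hij
  exact Tuple.monotone_sort ν (Fin.rev_le_rev.mpr hij)

theorem key_of_prec {ν η : Fin n →₀ ℕ} (h : prec n ν η) : key ν < key η := by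
  rw [key_lt]
  rcases h with h | ⟨h1, h2⟩
  · left
    have := sq_lt (sortDesc_anti ν) h
    rwa [sortDesc_sq, sortDesc_sq] at this
  · right
    refine ⟨?_, D_lt h2⟩
    unfold Qf
    have a := sortDesc_sq (⇑ν)
    have b := sortDesc_sq (⇑η)
    rw [h1] at a
    exact a.symm.trans b

end order

theorem main (n : ℕ) (η : Fin n → ℕ)
    (T : ℕ → P n →ₗ[K] P n) (hT : IsDL n t T)
    (Tw : Equiv.Perm (Fin n) → P n →ₗ[K] P n) (hTw : IsTsigma n T Tw)
    (autK : K →+* K) (haq : autK q = q⁻¹) (hat : autK t = t⁻¹)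
    (E : P n) (hE : IsNSMac n q t T η E) :
    Tw (Fin.revPerm : Equiv.Perm (Fin n))
        (rename Fin.rev (MvPolynomial.map autK E)) =
      C (t ^ (univ.filter fun p : Fin n × Fin n => p.1 < p.2 ∧ η p.2 ≤ η p.1).card) * E := by
  obtain ⟨hE1, hE2, hE3⟩ := hE
  set N := (univ.filter fun p : Fin n × Fin n => p.1 < p.2 ∧ η p.2 ≤ η p.1).card with hN
  set η' : Fin n →₀ ℕ := Finsupp.equivFunOnFinite.symm η with hη'
  have hη : ∀ i, η' i = η i := fun i => rfl
  rw [← io_apply, ← sub_eq_zero, ← smul_eq_C_mul]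
  apply unique_zero hT η' (legCo n η)
  · intro i
    rw [map_sub, map_smul, G_eigen autK haq hat hT hTw i E _ _ (hE3 i), hE3 i, smul_sub,
      smul_comm (t ^ N), hη]
  · rw [coeff_sub, coeff_smul, hE1, sub_eq_zero]
    have hrr : ∀ ν : Fin n →₀ ℕ, act Fin.revPerm (act Fin.revPerm ν) = ν := by
      intro ν; ext i; simp [act_apply, rev_inv]
    have hco : ∀ ν, coeff (act Fin.revPerm ν) (io n autK E) = autK (coeff ν E) := by
      intro ν
      rw [io_apply]
      have := coeff_rename_mapDomain (R := K) (Fin.rev : Fin n → Fin n) Fin.rev_injective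
        (MvPolynomial.map autK E) ν
      rw [coeff_map] at this
      exact this
    have h1 := Tri_coeff (Tw_tri hT hTw Fin.revPerm) (io n autK E) (act Fin.revPerm η') (by
      intro l hl hne
      have hl' := mem_support_iff.mp hl
      rw [hrr]
      obtain ⟨ν, rfl⟩ : ∃ ν, l = act Fin.revPerm ν := ⟨_, (hrr l).symm⟩
      rw [hrr]
      rw [hco] at hl'
      have hν : coeff ν E ≠ 0 := fun h => hl' (by rw [h, map_zero])
      rcases hE2 ν hν with h | h
      · exact absurd (by congr 1; exact DFunLike.coe_injective h) hne
      · exact not_lt.mpr (key_of_prec (η := η') h).le)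
    rw [hrr, hco, hE1, map_one, mul_one] at h1
    rw [h1, smul_eq_mul, mul_one]
    congr 1
    rw [hN]
    apply Finset.card_bij (fun p _ => (p.2.rev, p.1.rev))
    · rintro ⟨a, b⟩ h
      simp only [mem_filter, mem_invSet, act_apply, rev_inv, Fin.revPerm_apply, hη, mem_univ, true_and] at h ⊢
      exact ⟨Fin.rev_lt_rev.mpr h.1.1, h.2⟩
    · rintro ⟨a, b⟩ _ ⟨c, d⟩ _ h
      simp only [Prod.mk.injEq, Fin.rev_inj] at h
      rw [h.1, h.2]
    · rintro ⟨a, b⟩ h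
      simp only [mem_filter, mem_univ, true_and] at h
      refine ⟨(b.rev, a.rev), ?_, by simp⟩
      simp only [mem_filter, mem_invSet, act_apply, rev_inv, Fin.revPerm_apply, hη, Fin.rev_rev]
      exact ⟨⟨Fin.rev_lt_rev.mpr h.1, h.1⟩, h.2⟩

end Stmt5

theorem stmt_5 (n : ℕ) (η : Fin n → ℕ)
    (T : ℕ → P n →ₗ[K] P n) (hT : IsDL n t T)
    (Tw : Equiv.Perm (Fin n) → P n →ₗ[K] P n) (hTw : IsTsigma n T Tw)
    -- the field automorphism of K = ℚ(q,t) with q ↦ q⁻¹ and t ↦ t⁻¹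
    (autK : K →+* K) (haq : autK q = q⁻¹) (hat : autK t = t⁻¹)
    (E : P n) (hE : IsNSMac n q t T η E) :
    Tw (Fin.revPerm : Equiv.Perm (Fin n))
        (rename Fin.rev (MvPolynomial.map autK E)) =
      C (t ^ (univ.filter fun p : Fin n × Fin n => p.1 < p.2 ∧ η p.2 ≤ η p.1).card) * E := by
  exact Stmt5.main n η T hT Tw hTw autK haq hat E hE
end

section
/- Let ι be the ℚ-algebra involution of K[x_1,…,x_n] determined by ι(q)=q^{−1}, ι(t)=t^{−1}, and ι(x_i)=x_{n+1−i}. Then for every f∈K[x_1,…,x_n]: ι(U^+(ι(f))) = t^{−n(n−1)/2}·U^+ f and ι(U^-(ι(f))) = t^{n(n−1)/2}·U^- f. -/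
/- STATEMENT 6: for the involution ι (with ι(q)=q⁻¹, ι(t)=t⁻¹, ι(x_i)=x_{n+1−i}):
ι(U⁺(ι f)) = t^{−n(n−1)/2}·U⁺ f and ι(U⁻(ι f)) = t^{n(n−1)/2}·U⁻ f. -/

open Finset MvPolynomial

namespace Stmt6

/-- leg colength l'_η(i) -/
def legCo (n : ℕ) (η : Fin n → ℕ) (i : Fin n) : ℕ :=
  (univ.filter fun k => k < i ∧ η i ≤ η k).card +
  (univ.filter fun k => i < k ∧ η i < η k).card

/-- leg length l(s) of the node s = (i,j) -/
def leg (n : ℕ) (η : Fin n → ℕ) (i : Fin n) (j : ℕ) : ℕ :=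
  (univ.filter fun k => i < k ∧ j ≤ η k ∧ η k ≤ η i).card +
  (univ.filter fun k => k < i ∧ j ≤ η k + 1 ∧ η k + 1 ≤ η i).card

/-- The field K = ℚ(q,t). -/
abbrev K : Type := FractionRing (MvPolynomial (Fin 2) ℚ)

noncomputable def q : K := algebraMap (MvPolynomial (Fin 2) ℚ) K (X 0)
noncomputable def t : K := algebraMap (MvPolynomial (Fin 2) ℚ) K (X 1)

/-- The polynomial ring K[x_1,…,x_n]. -/
abbrev P (n : ℕ) : Type := MvPolynomial (Fin n) K

/-- the automorphism s_k exchanging x_k and x_{k+1} (0-indexed; identity out of range) -/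
noncomputable def sOp (n : ℕ) (k : ℕ) : P n →ₗ[K] P n :=
  if h : k + 1 < n then
    (rename (Equiv.swap (⟨k, Nat.lt_of_succ_lt h⟩ : Fin n) ⟨k + 1, h⟩)).toLinearMap
  else LinearMap.id

/-- τ_1 : x_1 ↦ qv·x_1 (the first variable is 0-indexed) -/
noncomputable def tauOp (n : ℕ) (qv : K) : P n →ₗ[K] P n :=
  (aeval (fun j : Fin n => if (j : ℕ) = 0 then C qv * X j else X j)).toLinearMap

/-- ω := s_{n−1}⋯s_2 s_1 τ_1 -/
noncomputable def omegaOp (n : ℕ) (qv : K) : P n →ₗ[K] P n :=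
  (List.range (n - 1)).foldl (fun acc k => sOp n k ∘ₗ acc) (tauOp n qv)

/-- The defining property of the Demazure–Lustig operators T_k (0-indexed), for the
parameter value tv: (x_k − x_{k+1})·(T_k f) = (x_k − x_{k+1})·tv·f
+ (tv·x_k − x_{k+1})·(s_k f − f), i.e. T_k f is the polynomial quotient from the usual
definition. -/
def IsDL (n : ℕ) (tv : K) (T : ℕ → P n →ₗ[K] P n) : Prop :=
  ∀ k, ∀ hk : k + 1 < n, ∀ f : P n,
    (X (⟨k, Nat.lt_of_succ_lt hk⟩ : Fin n) - X ⟨k + 1, hk⟩) * T k f =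
      (X (⟨k, Nat.lt_of_succ_lt hk⟩ : Fin n) - X ⟨k + 1, hk⟩) * (C tv * f) +
      (C tv * X (⟨k, Nat.lt_of_succ_lt hk⟩ : Fin n) - X ⟨k + 1, hk⟩) * (sOp n k f - f)

/-- T_k⁻¹ = tv⁻¹ − 1 + tv⁻¹ T_k -/
noncomputable def Tinv (n : ℕ) (tv : K) (T : ℕ → P n →ₗ[K] P n) (k : ℕ) : P n →ₗ[K] P n :=
  tv⁻¹ • LinearMap.id - LinearMap.id + tv⁻¹ • T k

/-- The Cherednik operator Y_i (0-indexed i):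
Y_i = tv^{i+1−n}·T_i⋯T_{n−2}·ω·T_0⁻¹⋯T_{i−1}⁻¹. -/
noncomputable def Yop (n : ℕ) (qv tv : K) (T : ℕ → P n →ₗ[K] P n) (i : Fin n) :
    P n →ₗ[K] P n :=
  (tv ^ (n - 1 - (i : ℕ)))⁻¹ •
    (((List.range' (i : ℕ) (n - 1 - (i : ℕ))).foldr (fun k acc => T k ∘ₗ acc) LinearMap.id) ∘ₗ
      omegaOp n qv ∘ₗ
      ((List.range (i : ℕ)).foldr (fun k acc => Tinv n tv T k ∘ₗ acc) LinearMap.id))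

/-- the decreasing rearrangement η⁺ of η -/
noncomputable def sortDesc (n : ℕ) (η : Fin n → ℕ) : Fin n → ℕ :=
  fun i => η (Tuple.sort η i.rev)

/-- dominance order on n-tuples (of equal sum) -/
def domLE (n : ℕ) (ν μ : Fin n → ℕ) : Prop :=
  (∑ i, ν i = ∑ i, μ i) ∧
  ∀ p : Fin n, ∑ i ∈ univ.filter (· ≤ p), ν i ≤ ∑ i ∈ univ.filter (· ≤ p), μ i

def domLT (n : ℕ) (ν μ : Fin n → ℕ) : Prop := domLE n ν μ ∧ ν ≠ μ

/-- the order ≺ : ν ≺ η iff ν⁺ < η⁺, or ν⁺ = η⁺ and ν < η (dominance order) -/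
noncomputable def prec (n : ℕ) (ν η : Fin n → ℕ) : Prop :=
  domLT n (sortDesc n ν) (sortDesc n η) ∨ (sortDesc n ν = sortDesc n η ∧ domLT n ν η)

/-- E is the non-symmetric Macdonald polynomial for the composition η (with parameters
qv, tv and Demazure–Lustig operators T): it has the triangular form
E = x^η + Σ_{ν≺η} b_{ην} x^ν and satisfies Y_i E = qv^{η_i}·tv^{−l'_η(i)}·E for all i. -/
noncomputable def IsNSMac (n : ℕ) (qv tv : K) (T : ℕ → P n →ₗ[K] P n)
    (η : Fin n → ℕ) (E : P n) : Prop :=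
  coeff (Finsupp.equivFunOnFinite.symm η) E = 1 ∧
  (∀ ν : Fin n →₀ ℕ, coeff ν E ≠ 0 → (ν : Fin n → ℕ) = η ∨ prec n (ν : Fin n → ℕ) η) ∧
  ∀ i : Fin n, Yop n qv tv T i E = (qv ^ η i / tv ^ legCo n η i) • E

/-- the adjacent transposition s_k as a permutation (identity out of range, 0-indexed) -/
def sPerm (n : ℕ) (k : ℕ) : Equiv.Perm (Fin n) :=
  if h : k + 1 < n then Equiv.swap ⟨k, Nat.lt_of_succ_lt h⟩ ⟨k + 1, h⟩ else 1

/-- the length l(σ) of a permutation, i.e. its number of inversions -/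
def inversions {n : ℕ} (σ : Equiv.Perm (Fin n)) : ℕ :=
  (univ.filter fun p : Fin n × Fin n => p.1 < p.2 ∧ σ p.2 < σ p.1).card

/-- The defining property of σ ↦ T_σ: T_1 = id and T_{σ·s_k} = T_σ ∘ T_k whenever
l(σ·s_k) = l(σ)+1; by the braid relations this determines T_σ = T_{i_1}⋯T_{i_p} for any
reduced word σ = s_{i_1}⋯s_{i_p}. -/
def IsTsigma (n : ℕ) (T : ℕ → P n →ₗ[K] P n)
    (Tw : Equiv.Perm (Fin n) → P n →ₗ[K] P n) : Prop :=
  Tw 1 = LinearMap.id ∧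
  ∀ σ : Equiv.Perm (Fin n), ∀ k, k + 1 < n →
    inversions (σ * sPerm n k) = inversions σ + 1 →
    Tw (σ * sPerm n k) = Tw σ ∘ₗ T k

/-- U⁺ := Σ_σ T_σ -/
noncomputable def Uplus (n : ℕ) (Tw : Equiv.Perm (Fin n) → P n →ₗ[K] P n) :
    P n →ₗ[K] P n := ∑ σ : Equiv.Perm (Fin n), Tw σ

/-- U⁻ := Σ_σ (−tv)^{−l(σ)} T_σ -/
noncomputable def Uminus (n : ℕ) (tv : K) (Tw : Equiv.Perm (Fin n) → P n →ₗ[K] P n) :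
    P n →ₗ[K] P n := ∑ σ : Equiv.Perm (Fin n), ((-tv) ^ inversions σ)⁻¹ • Tw σ

/-- the monomial x^η -/
noncomputable def xmon (n : ℕ) (η : Fin n → ℕ) : P n :=
  monomial (Finsupp.equivFunOnFinite.symm η) 1

end Stmt6


namespace Stmt6

lemma sPerm_of_lt {n k : ℕ} (hk : k + 1 < n) :
    sPerm n k = Equiv.swap ⟨k, Nat.lt_of_succ_lt hk⟩ ⟨k + 1, hk⟩ := by
  simp [sPerm, hk]

lemma sPerm_sq (n k : ℕ) : sPerm n k * sPerm n k = 1 := by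
  unfold sPerm
  split_ifs <;> simp

lemma inv_up {n k : ℕ} (hk : k + 1 < n) (σ : Equiv.Perm (Fin n))
    (h : σ ⟨k, Nat.lt_of_succ_lt hk⟩ < σ ⟨k + 1, hk⟩) :
    inversions (σ * sPerm n k) = inversions σ + 1 := by
  rw [sPerm_of_lt hk]
  set a : Fin n := ⟨k, Nat.lt_of_succ_lt hk⟩ with ha
  set b : Fin n := ⟨k + 1, hk⟩ with hb
  have hab : a < b := by simp [ha, hb]
  have key : ∀ x : Fin n, x = a ∨ x = b ∨ x < a ∨ b < x := by
    intro x
    simp only [ha, hb, Fin.ext_iff, Fin.lt_def]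
    omega
  have hsa : Equiv.swap a b a = b := Equiv.swap_apply_left a b
  have hsb : Equiv.swap a b b = a := Equiv.swap_apply_right a b
  have hso : ∀ x, x < a ∨ b < x → Equiv.swap a b x = x := by
    intro x hx
    apply Equiv.swap_apply_of_ne_of_ne
    · rintro rfl
      rcases hx with hx | hx
      · exact lt_irrefl _ hx
      · exact lt_asymm hab hx
    · rintro rfl
      rcases hx with hx | hx
      · exact lt_asymm hab hx
      · exact lt_irrefl _ hx
  have hlt : ∀ x y : Fin n, (x, y) ≠ (a, b) → x < y → Equiv.swap a b x < Equiv.swap a b y := by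
    intro x y hne hxy
    rcases key x with rfl | rfl | hx <;> rcases key y with rfl | rfl | hy
    · exact absurd hxy (lt_irrefl _)
    · exact absurd rfl hne
    · rw [hsa, hso y hy]
      rcases hy with hy | hy
      · exact absurd hxy (lt_asymm hy)
      · exact hy
    · exact absurd hxy (lt_asymm hab)
    · exact absurd hxy (lt_irrefl _)
    · rw [hsb, hso y hy]
      rcases hy with hy | hy
      · exact absurd hxy (lt_asymm (hy.trans hab))
      · exact hab.trans hy
    · rw [hsa, hso x hx]
      exact hxy.trans hab
    · rw [hsb, hso x hx]
      rcases hx with hx | hx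
      · exact hx
      · exact absurd hxy (lt_asymm hx)
    · rw [hso x hx, hso y hy]
      exact hxy
  have e : (univ.filter fun p : Fin n × Fin n => p.1 < p.2 ∧
      (σ * Equiv.swap a b) p.2 < (σ * Equiv.swap a b) p.1) =
      insert (a, b) ((univ.filter fun p : Fin n × Fin n => p.1 < p.2 ∧ σ p.2 < σ p.1).map
        (Equiv.prodCongr (Equiv.swap a b) (Equiv.swap a b)).toEmbedding) := by
    ext ⟨x, y⟩
    simp only [mem_filter, mem_univ, true_and, mem_insert, mem_map_equiv]
    simp only [Equiv.Perm.mul_apply,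
      Equiv.prodCongr_symm, Equiv.symm_swap, Equiv.prodCongr_apply, Prod.map]
    by_cases hxy : (x, y) = (a, b)
    · rw [Prod.mk.injEq] at hxy
      obtain ⟨rfl, rfl⟩ := hxy
      simp only [hsa, hsb, true_or, iff_true]
      exact ⟨hab, h⟩
    · simp only [hxy, false_or]
      constructor
      · rintro ⟨h1, h2⟩
        exact ⟨hlt x y hxy h1, h2⟩
      · rintro ⟨h1, h2⟩
        refine ⟨?_, h2⟩
        have := hlt _ _ ?_ h1
        · simpa using this
        · intro hc
          rw [Prod.mk.injEq] at hc
          rw [hc.1, hc.2] at h2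
          exact lt_asymm h h2
  unfold inversions
  rw [e, card_insert_of_notMem, card_map]
  simp only [mem_filter, mem_univ, true_and, mem_map_equiv,
      Equiv.prodCongr_symm, Equiv.symm_swap, Equiv.prodCongr_apply, Prod.map, hsa, hsb]
  intro hc
  exact lt_asymm hab hc.1

lemma inv_down {n k : ℕ} (hk : k + 1 < n) (σ : Equiv.Perm (Fin n))
    (h : σ ⟨k + 1, hk⟩ < σ ⟨k, Nat.lt_of_succ_lt hk⟩) :
    inversions (σ * sPerm n k) + 1 = inversions σ := by
  have := inv_up hk (σ * sPerm n k) (by simpa [sPerm_of_lt hk] using h)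
  rw [mul_assoc, sPerm_sq, mul_one] at this
  exact this.symm

lemma inv_dich {n k : ℕ} (hk : k + 1 < n) (σ : Equiv.Perm (Fin n)) :
    inversions (σ * sPerm n k) = inversions σ + 1 ∨
    inversions (σ * sPerm n k) + 1 = inversions σ := by
  rcases lt_trichotomy (σ ⟨k, Nat.lt_of_succ_lt hk⟩) (σ ⟨k + 1, hk⟩) with h | h | h
  · exact Or.inl (inv_up hk σ h)
  · exact absurd (σ.injective h) (by simp [Fin.ext_iff])
  · exact Or.inr (inv_down hk σ h)

lemma exists_descent {n : ℕ} (σ : Equiv.Perm (Fin n)) (hσ : σ ≠ 1) :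
    ∃ k, ∃ hk : k + 1 < n, σ ⟨k + 1, hk⟩ < σ ⟨k, Nat.lt_of_succ_lt hk⟩ := by
  by_contra! hc
  apply hσ
  have hm : StrictMono σ := by
    cases n with
    | zero => intro x; exact x.elim0
    | succ m =>
      rw [Fin.strictMono_iff_lt_succ]
      intro i
      refine lt_of_le_of_ne (hc i (by omega)) ?_
      intro h
      have := σ.injective h
      simp [Fin.ext_iff] at this
  have := Subsingleton.elim (StrictMono.orderIsoOfSurjective σ hm σ.surjective)
    (OrderIso.refl (Fin n))
  ext x
  have := congrArg (fun g : Fin n ≃o Fin n => ((g x : Fin n) : ℕ)) this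
  simpa using this

lemma perm_ind {n : ℕ} {Q : Equiv.Perm (Fin n) → Prop} (h1 : Q 1)
    (hs : ∀ σ k, k + 1 < n → inversions (σ * sPerm n k) = inversions σ + 1 → Q σ →
      Q (σ * sPerm n k)) (σ : Equiv.Perm (Fin n)) : Q σ := by
  induction hN : inversions σ generalizing σ with
  | zero =>
    by_cases hσ : σ = 1
    · rw [hσ]; exact h1
    · obtain ⟨k, hk, h⟩ := exists_descent σ hσ
      have := inv_down hk σ h
      omega
  | succ N ih =>
    by_cases hσ : σ = 1
    · rw [hσ]; exact h1
    · obtain ⟨k, hk, h⟩ := exists_descent σ hσ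
      have h2 := inv_down hk σ h
      have h3 := hs (σ * sPerm n k) k hk
        (by rw [mul_assoc, sPerm_sq, mul_one]; omega) (ih _ (by omega))
      rwa [mul_assoc, sPerm_sq, mul_one] at h3

lemma inv_one (n : ℕ) : inversions (1 : Equiv.Perm (Fin n)) = 0 := by
  unfold inversions
  rw [card_eq_zero, filter_eq_empty_iff]
  rintro p - ⟨h1, h2⟩
  exact lt_asymm h1 h2

lemma invn_symm {n : ℕ} (σ : Equiv.Perm (Fin n)) : inversions σ⁻¹ = inversions σ := by
  unfold inversions
  refine card_bij' (fun p _ => (σ⁻¹ p.2, σ⁻¹ p.1)) (fun p _ => (σ p.2, σ p.1)) ?_ ?_ ?_ ?_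
  · rintro p hp
    simp only [mem_filter, mem_univ, true_and] at hp ⊢
    simpa using hp.symm
  · rintro p hp
    simp only [mem_filter, mem_univ, true_and] at hp ⊢
    simpa using hp.symm
  · rintro p hp
    simp
  · rintro p hp
    simp

lemma sPerm_inv (n k : ℕ) : (sPerm n k)⁻¹ = sPerm n k :=
  inv_eq_of_mul_eq_one_right (sPerm_sq n k)

lemma inv_dich_left {n k : ℕ} (hk : k + 1 < n) (σ : Equiv.Perm (Fin n)) :
    inversions (sPerm n k * σ) = inversions σ + 1 ∨
    inversions (sPerm n k * σ) + 1 = inversions σ := by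
  have := inv_dich hk σ⁻¹
  rw [← invn_symm (sPerm n k * σ), mul_inv_rev, sPerm_inv, ← invn_symm σ]
  exact this

lemma inv_conj {n : ℕ} (σ : Equiv.Perm (Fin n)) :
    inversions (Fin.revPerm * σ * Fin.revPerm) = inversions σ := by
  unfold inversions
  refine card_bij' (fun p _ => (Fin.rev p.2, Fin.rev p.1)) (fun p _ => (Fin.rev p.2, Fin.rev p.1))
    ?_ ?_ ?_ ?_
  · rintro p hp
    simp only [mem_filter, mem_univ, true_and] at hp ⊢
    simpa using hp
  · rintro p hp
    simp only [mem_filter, mem_univ, true_and] at hp ⊢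
    simpa using hp
  · rintro p hp
    simp
  · rintro p hp
    simp

lemma card_pairs (n : ℕ) :
    (univ.filter fun p : Fin n × Fin n => p.1 < p.2).card = n * (n - 1) / 2 := by
  have h1 : (univ.filter fun p : Fin n × Fin n => p.1 < p.2).card =
      ∑ b : Fin n, (univ.filter fun a : Fin n => a < b).card := by
    rw [card_filter, Fintype.sum_prod_type_right]
    simp only [card_filter]
  rw [h1]
  have h2 : ∀ b : Fin n, (univ.filter fun a : Fin n => a < b).card = (b : ℕ) := by
    intro b
    have : (univ.filter fun a : Fin n => a < b) = Finset.Iio b := by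
      ext a
      rw [mem_filter, mem_Iio]
      exact ⟨fun h => h.2, fun h => ⟨mem_univ _, h⟩⟩
    rw [this, Fin.card_Iio]
  simp only [h2]
  rw [Fin.sum_univ_eq_sum_range (fun i => i) n, sum_range_id]

lemma inv_rev {n : ℕ} (σ : Equiv.Perm (Fin n)) :
    inversions (Fin.revPerm * σ) + inversions σ = n * (n - 1) / 2 := by
  rw [← card_pairs, ← card_filter_add_card_filter_not
    (s := univ.filter fun p : Fin n × Fin n => p.1 < p.2) (fun p => σ p.1 < σ p.2)]
  unfold inversions
  rw [filter_filter, filter_filter]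
  congr 2
  · ext p
    simp
  · ext p
    simp only [mem_filter, mem_univ, true_and, not_lt]
    refine and_congr_right fun h => ⟨le_of_lt, fun h' => lt_of_le_of_ne h' ?_⟩
    intro hc
    exact h.ne' (σ.injective hc)

lemma rev_conj_sPerm {n k : ℕ} (hk : k + 1 < n) :
    Fin.revPerm * sPerm n k * Fin.revPerm = sPerm n (n - 2 - k) := by
  have hk' : (n - 2 - k) + 1 < n := by omega
  rw [sPerm_of_lt hk, sPerm_of_lt hk']
  have h := Equiv.swap_apply_apply (Fin.revPerm : Equiv.Perm (Fin n))
    ⟨k, Nat.lt_of_succ_lt hk⟩ ⟨k + 1, hk⟩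
  have h' : (Fin.revPerm : Equiv.Perm (Fin n))⁻¹ = Fin.revPerm := rfl
  rw [h'] at h
  rw [← h, Equiv.swap_comm]
  congr 1 <;> simp [Fin.ext_iff] <;> omega

end Stmt6

namespace Stmt6

lemma t_ne_zero : t ≠ 0 := by
  unfold t
  rw [Ne, map_eq_zero_iff _ (IsFractionRing.injective (MvPolynomial (Fin 2) ℚ) K)]
  exact X_ne_zero 1

lemma aut_aut (autK : K →+* K) (haq : autK q = q⁻¹) (hat : autK t = t⁻¹) :
    autK.comp autK = RingHom.id K := by
  apply IsLocalization.ringHom_ext (nonZeroDivisors (MvPolynomial (Fin 2) ℚ))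
  apply MvPolynomial.ringHom_ext
  · intro r
    simp only [RingHom.comp_apply, RingHom.id_apply]
    have h : ∀ g h : ℚ →+* K, g r = h r := fun g h => by rw [Subsingleton.elim g h]
    exact h (((autK.comp autK).comp (algebraMap (MvPolynomial (Fin 2) ℚ) K)).comp C)
      ((algebraMap (MvPolynomial (Fin 2) ℚ) K).comp C)
  · intro i
    simp only [RingHom.comp_apply, RingHom.id_apply]
    fin_cases i
    · change autK (autK q) = q
      rw [haq, map_inv₀, haq, inv_inv]
    · change autK (autK t) = t
      rw [hat, map_inv₀, hat, inv_inv]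

/-- the involution ι -/
noncomputable def iot (n : ℕ) (autK : K →+* K) : P n →+* P n :=
  (rename (R := K) (Fin.rev : Fin n → Fin n)).toRingHom.comp (MvPolynomial.map autK)

lemma iot_apply (n : ℕ) (autK : K →+* K) (f : P n) :
    iot n autK f = rename Fin.rev (MvPolynomial.map autK f) := rfl

lemma iot_X (n : ℕ) (autK : K →+* K) (i : Fin n) : iot n autK (X i) = X i.rev := by
  simp [iot_apply]

lemma iot_C (n : ℕ) (autK : K →+* K) (a : K) : iot n autK (C a) = C (autK a) := by
  simp [iot_apply]

lemma iot_smul (n : ℕ) (autK : K →+* K) (a : K) (f : P n) :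
    iot n autK (a • f) = autK a • iot n autK f := by
  rw [smul_eq_C_mul, map_mul, iot_C, ← smul_eq_C_mul]

lemma iot_iot {n : ℕ} {autK : K →+* K} (h : autK.comp autK = RingHom.id K) (f : P n) :
    iot n autK (iot n autK f) = f := by
  have : (iot n autK).comp (iot n autK) = RingHom.id (P n) := by
    apply MvPolynomial.ringHom_ext
    · intro r
      have := congrArg (fun g : K →+* K => g r) h
      simp only [RingHom.comp_apply, RingHom.id_apply] at this
      simp [iot_C, this]
    · intro i
      simp [iot_X]
  exact congrArg (fun g : P n →+* P n => g f) this

lemma sOp_eq {n k : ℕ} (hk : k + 1 < n) (f : P n) :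
    sOp n k f = rename (Equiv.swap (⟨k, Nat.lt_of_succ_lt hk⟩ : Fin n) ⟨k + 1, hk⟩) f := by
  simp [sOp, hk]

lemma sOp_sPerm {n k : ℕ} (hk : k + 1 < n) (f : P n) :
    sOp n k f = rename (sPerm n k) f := by
  rw [sOp_eq hk, sPerm_of_lt hk]

lemma iot_sOp {n k : ℕ} (hk : k + 1 < n) (autK : K →+* K) (f : P n) :
    iot n autK (sOp n (n - 2 - k) f) = sOp n k (iot n autK f) := by
  have hk' : (n - 2 - k) + 1 < n := by omega
  rw [sOp_sPerm hk, sOp_sPerm hk', iot_apply, iot_apply, map_rename, rename_rename, rename_rename,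
    ← rev_conj_sPerm hk]
  congr 2
  ext x
  simp

lemma X_sub_ne {n k : ℕ} (hk : k + 1 < n) :
    (X (⟨k, Nat.lt_of_succ_lt hk⟩ : Fin n) - X ⟨k + 1, hk⟩ : P n) ≠ 0 := by
  rw [sub_ne_zero]
  intro h
  have := X_injective h
  simp [Fin.ext_iff] at this

lemma iot_T {n k : ℕ} (hk : k + 1 < n) (T : ℕ → P n →ₗ[K] P n) (hT : IsDL n t T)
    (autK : K →+* K) (hat : autK t = t⁻¹) (ha : autK.comp autK = RingHom.id K) (f : P n) :
    iot n autK (T (n - 2 - k) (iot n autK f)) = Tinv n t T k f := by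
  have hk' : (n - 2 - k) + 1 < n := by omega
  have h1 := congrArg (iot n autK) (hT (n - 2 - k) hk' (iot n autK f))
  have h2 := hT k hk f
  have r1 : Fin.rev (⟨n - 2 - k, Nat.lt_of_succ_lt hk'⟩ : Fin n) = ⟨k + 1, hk⟩ := by
    simp [Fin.ext_iff]; omega
  have r2 : Fin.rev (⟨n - 2 - k + 1, hk'⟩ : Fin n) = ⟨k, Nat.lt_of_succ_lt hk⟩ := by
    simp [Fin.ext_iff]; omega
  simp only [map_mul, map_sub, map_add, iot_X, iot_C, iot_sOp hk, iot_iot ha, hat, r1, r2] at h1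
  apply mul_left_cancel₀ (X_sub_ne hk)
  simp only [Tinv, LinearMap.add_apply, LinearMap.sub_apply, LinearMap.smul_apply,
    LinearMap.id_apply, smul_eq_C_mul]
  have hc : (C t⁻¹ : P n) * C t = 1 := by
    rw [← C_mul, inv_mul_cancel₀ t_ne_zero, C_1]
  generalize iot n autK (T (n - 2 - k) (iot n autK f)) = A at *
  generalize (X (⟨k, Nat.lt_of_succ_lt hk⟩ : Fin n) : P n) = x at *
  generalize (X (⟨k + 1, hk⟩ : Fin n) : P n) = y at *
  generalize (C t⁻¹ : P n) = u at *
  generalize (C t : P n) = v at *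
  generalize T k f = B at *
  generalize sOp n k f = s at *
  linear_combination -h1 - u * h2 - ((x - y) * f + x * (s - f)) * hc

lemma sOp_sOp {n k : ℕ} (hk : k + 1 < n) (f : P n) : sOp n k (sOp n k f) = f := by
  rw [sOp_eq hk, sOp_eq hk, rename_rename]
  have : (Equiv.swap (⟨k, Nat.lt_of_succ_lt hk⟩ : Fin n) ⟨k + 1, hk⟩ ∘
    Equiv.swap (⟨k, Nat.lt_of_succ_lt hk⟩ : Fin n) ⟨k + 1, hk⟩) = id := by
    ext x
    simp
  rw [this, rename_id_apply]

lemma T_quad {n k : ℕ} (hk : k + 1 < n) (T : ℕ → P n →ₗ[K] P n) (hT : IsDL n t T) (f : P n) :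
    T k (T k f) = (t - 1) • T k f + t • f := by
  have h1 := hT k hk f
  have h2 := hT k hk (T k f)
  have h3 := congrArg (sOp n k) h1
  have e : ∀ a b : P n, sOp n k (a * b) = sOp n k a * sOp n k b := by
    intro a b
    simp [sOp_eq hk]
  have eX : sOp n k (X (⟨k, Nat.lt_of_succ_lt hk⟩ : Fin n)) = X ⟨k + 1, hk⟩ := by
    simp [sOp_eq hk]
  have eY : sOp n k (X (⟨k + 1, hk⟩ : Fin n)) = X ⟨k, Nat.lt_of_succ_lt hk⟩ := by
    simp [sOp_eq hk]
  have eC : ∀ a : K, sOp n k (C a) = C a := by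
    intro a
    simp [sOp_eq hk]
  simp only [e, map_sub, map_add, eX, eY, eC, sOp_sOp hk] at h3
  apply mul_left_cancel₀ (X_sub_ne hk)
  apply mul_left_cancel₀ (X_sub_ne hk)
  simp only [smul_eq_C_mul, C_sub, C_1]
  generalize (X (⟨k, Nat.lt_of_succ_lt hk⟩ : Fin n) : P n) = x at *
  generalize (X (⟨k + 1, hk⟩ : Fin n) : P n) = y at *
  generalize (C t : P n) = v at *
  generalize T k (T k f) = D at *
  generalize sOp n k (T k f) = E at *
  generalize T k f = B at *
  generalize sOp n k f = s at *
  linear_combination (x - y) * h2 - (v * x - y) * h3 + (v * x - y - (x - y) * v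
    + (x - y) * v - (v * x - y) - (v * x - y) + (x - y)) * h1

lemma T_Tinv {n k : ℕ} (hk : k + 1 < n) (T : ℕ → P n →ₗ[K] P n) (hT : IsDL n t T) (f : P n) :
    T k (Tinv n t T k f) = f := by
  simp only [Tinv, LinearMap.add_apply, LinearMap.sub_apply, LinearMap.smul_apply,
    LinearMap.id_apply, map_add, map_sub, map_smul, T_quad hk T hT, smul_add, smul_smul]
  have h : t⁻¹ * t = 1 := inv_mul_cancel₀ t_ne_zero
  rw [mul_sub, h, sub_smul]
  simp only [mul_one, one_smul]
  abel

lemma Tinv_T {n k : ℕ} (hk : k + 1 < n) (T : ℕ → P n →ₗ[K] P n) (hT : IsDL n t T) (f : P n) :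
    Tinv n t T k (T k f) = f := by
  simp only [Tinv, LinearMap.add_apply, LinearMap.sub_apply, LinearMap.smul_apply,
    LinearMap.id_apply, T_quad hk T hT, smul_add, smul_smul]
  have h : t⁻¹ * t = 1 := inv_mul_cancel₀ t_ne_zero
  rw [mul_sub, h, sub_smul]
  simp only [mul_one, one_smul]
  abel

lemma Tw_inj {n : ℕ} (T : ℕ → P n →ₗ[K] P n) (hT : IsDL n t T)
    (Tw : Equiv.Perm (Fin n) → P n →ₗ[K] P n) (hTw : IsTsigma n T Tw)
    (σ : Equiv.Perm (Fin n)) : Function.Injective (Tw σ) := by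
  induction σ using perm_ind with
  | h1 => rw [hTw.1]; exact fun _ _ h => h
  | hs σ k hk hl ih =>
    rw [hTw.2 σ k hk hl]
    exact ih.comp (Function.LeftInverse.injective (Tinv_T hk T hT))

lemma Tw_left {n : ℕ} (T : ℕ → P n →ₗ[K] P n)
    (Tw : Equiv.Perm (Fin n) → P n →ₗ[K] P n) (hTw : IsTsigma n T Tw) {i : ℕ} (hi : i + 1 < n)
    (σ : Equiv.Perm (Fin n)) : inversions (sPerm n i * σ) = inversions σ + 1 →
    Tw (sPerm n i * σ) = T i ∘ₗ Tw σ := by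
  induction σ using perm_ind with
  | h1 =>
    intro h
    have := hTw.2 1 i hi (by simpa using h)
    rw [one_mul, hTw.1] at this
    rw [mul_one, hTw.1, this]
    rfl
  | hs σ k hk hl ih =>
    intro h
    rw [← mul_assoc] at h ⊢
    have h1 : inversions (sPerm n i * σ) = inversions σ + 1 := by
      rcases inv_dich hk (sPerm n i * σ) with h2 | h2 <;>
      rcases inv_dich_left hi σ with h3 | h3 <;> omega
    rw [hTw.2 _ k hk (by omega), hTw.2 σ k hk hl, ih h1]
    rfl

/-- the common generalization U_a of U⁺ and U⁻ -/
noncomputable def Ua (n : ℕ) (a : K) (Tw : Equiv.Perm (Fin n) → P n →ₗ[K] P n) :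
    P n →ₗ[K] P n := ∑ σ : Equiv.Perm (Fin n), (a ^ inversions σ) • Tw σ

lemma T_pair {n : ℕ} (T : ℕ → P n →ₗ[K] P n) (hT : IsDL n t T)
    (Tw : Equiv.Perm (Fin n) → P n →ₗ[K] P n) (hTw : IsTsigma n T Tw) {a : K}
    (ha : 1 + a * (t - 1) = a * t * a) {k : ℕ} (hk : k + 1 < n) (σ : Equiv.Perm (Fin n))
    (h : inversions (sPerm n k * σ) = inversions σ + 1) (f : P n) :
    T k (a ^ inversions σ • Tw σ f + a ^ inversions (sPerm n k * σ) • Tw (sPerm n k * σ) f) =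
    (a * t) • (a ^ inversions σ • Tw σ f +
      a ^ inversions (sPerm n k * σ) • Tw (sPerm n k * σ) f) := by
  rw [h, Tw_left T Tw hTw hk σ h]
  simp only [LinearMap.comp_apply, map_add, map_smul, T_quad hk T hT]
  have hC : (1 : P n) + C a * (C t - 1) = C a * C t * C a := by
    rw [← C_1, ← C_sub, ← C_mul, ← C_add, ha, C_mul, C_mul]
  simp only [smul_eq_C_mul, C_sub, C_1, C_mul, C_pow, pow_succ]
  linear_combination (C a ^ inversions σ * T k (Tw σ f)) * hC

lemma T_Ua {n : ℕ} (T : ℕ → P n →ₗ[K] P n) (hT : IsDL n t T)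
    (Tw : Equiv.Perm (Fin n) → P n →ₗ[K] P n) (hTw : IsTsigma n T Tw) {a : K}
    (ha : 1 + a * (t - 1) = a * t * a) {k : ℕ} (hk : k + 1 < n) (f : P n) :
    T k (Ua n a Tw f) = (a * t) • Ua n a Tw f := by
  have h2 : (2 : K) • Ua n a Tw f = ∑ σ : Equiv.Perm (Fin n), (a ^ inversions σ • Tw σ f +
      a ^ inversions (sPerm n k * σ) • Tw (sPerm n k * σ) f) := by
    have := Equiv.sum_comp (Equiv.mulLeft (sPerm n k))
      (fun σ => a ^ inversions σ • Tw σ f)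
    simp only [Equiv.coe_mulLeft] at this
    rw [sum_add_distrib, this, two_smul]
    simp [Ua, LinearMap.sum_apply]
  have h3 : T k ((2 : K) • Ua n a Tw f) = (a * t) • ((2 : K) • Ua n a Tw f) := by
    rw [h2, map_sum, smul_sum]
    refine sum_congr rfl fun σ _ => ?_
    rcases inv_dich_left hk σ with h | h
    · exact T_pair T hT Tw hTw ha hk σ h f
    · have := T_pair T hT Tw hTw ha hk (sPerm n k * σ)
        (by rw [← mul_assoc, sPerm_sq, one_mul, h]) f
      rw [← mul_assoc, sPerm_sq, one_mul] at this
      rw [add_comm, this]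
  rw [map_smul, smul_comm] at h3
  exact smul_right_injective _ (two_ne_zero : (2 : K) ≠ 0) h3

lemma Tw_Ua {n : ℕ} (T : ℕ → P n →ₗ[K] P n) (hT : IsDL n t T)
    (Tw : Equiv.Perm (Fin n) → P n →ₗ[K] P n) (hTw : IsTsigma n T Tw) {a : K}
    (ha : 1 + a * (t - 1) = a * t * a) (f : P n) (σ : Equiv.Perm (Fin n)) :
    Tw σ (Ua n a Tw f) = (a * t) ^ inversions σ • Ua n a Tw f := by
  induction σ using perm_ind with
  | h1 => rw [hTw.1, inv_one]; simp
  | hs σ k hk hl ih =>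
    rw [hTw.2 σ k hk hl, LinearMap.comp_apply, T_Ua T hT Tw hTw ha hk, map_smul, ih, hl,
      smul_smul, pow_succ']

lemma Tw_iot {n : ℕ} (T : ℕ → P n →ₗ[K] P n) (hT : IsDL n t T)
    (Tw : Equiv.Perm (Fin n) → P n →ₗ[K] P n) (hTw : IsTsigma n T Tw)
    (autK : K →+* K) (hat : autK t = t⁻¹) (ha : autK.comp autK = RingHom.id K)
    (σ : Equiv.Perm (Fin n)) : ∀ f : P n,
    Tw Fin.revPerm (iot n autK (Tw (Fin.revPerm * σ * Fin.revPerm) (iot n autK f))) =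
      Tw (Fin.revPerm * σ) f := by
  have hrr : (Fin.revPerm * Fin.revPerm : Equiv.Perm (Fin n)) = 1 := by
    ext x
    simp
  induction σ using perm_ind with
  | h1 =>
    intro f
    rw [mul_one, hrr, hTw.1, LinearMap.id_apply, iot_iot ha]
  | hs σ k hk hl ih =>
    intro f
    have hk' : (n - 2 - k) + 1 < n := by omega
    have e : (Fin.revPerm * (σ * sPerm n k) * Fin.revPerm : Equiv.Perm (Fin n)) =
        (Fin.revPerm * σ * Fin.revPerm) * sPerm n (n - 2 - k) := by
      rw [← rev_conj_sPerm hk]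
      calc _ = Fin.revPerm * σ * 1 * sPerm n k * Fin.revPerm := by group
        _ = _ := by rw [← hrr]; group
    have h1 := hTw.2 (Fin.revPerm * σ * Fin.revPerm) (n - 2 - k) hk'
      (by rw [← e, inv_conj, inv_conj, hl])
    rw [e, h1, LinearMap.comp_apply]
    have h2 := iot_T hk T hT autK hat ha f
    have h3 : T (n - 2 - k) (iot n autK f) = iot n autK (Tinv n t T k f) := by
      rw [← h2, iot_iot ha]
    rw [h3, ih]
    have h4 := inv_rev σ
    have h5 := inv_rev (σ * sPerm n k)
    have h6 := hTw.2 (Fin.revPerm * (σ * sPerm n k)) k hk (by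
      rw [mul_assoc, mul_assoc, sPerm_sq, mul_one]; omega)
    rw [mul_assoc, mul_assoc, sPerm_sq, mul_one] at h6
    rw [h6, LinearMap.comp_apply, T_Tinv hk T hT]

lemma iot_Ua {n : ℕ} (T : ℕ → P n →ₗ[K] P n) (hT : IsDL n t T)
    (Tw : Equiv.Perm (Fin n) → P n →ₗ[K] P n) (hTw : IsTsigma n T Tw)
    (autK : K →+* K) (hat : autK t = t⁻¹) (hi : autK.comp autK = RingHom.id K)
    {a : K} (ha : 1 + a * (t - 1) = a * t * a) (ha0 : a ≠ 0) (haa : autK a = a⁻¹) (f : P n) :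
    iot n autK (Ua n a Tw (iot n autK f)) =
      ((a * a * t) ^ (n * (n - 1) / 2))⁻¹ • Ua n a Tw f := by
  apply Tw_inj T hT Tw hTw Fin.revPerm
  have hN : inversions (Fin.revPerm : Equiv.Perm (Fin n)) = n * (n - 1) / 2 := by
    have := inv_rev (1 : Equiv.Perm (Fin n))
    rwa [mul_one, inv_one, add_zero] at this
  rw [map_smul, Tw_Ua T hT Tw hTw ha, hN, smul_smul]
  have hc : ((a * a * t) ^ (n * (n - 1) / 2))⁻¹ * (a * t) ^ (n * (n - 1) / 2) =
      (a ^ (n * (n - 1) / 2))⁻¹ := by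
    have := t_ne_zero
    rw [mul_assoc a a t, mul_pow a (a * t)]
    have : (a * t) ^ (n * (n - 1) / 2) ≠ 0 := pow_ne_zero _ (mul_ne_zero ha0 this)
    field_simp
  rw [hc]
  have s1 : Ua n a Tw (iot n autK f) = ∑ σ : Equiv.Perm (Fin n),
      a ^ inversions σ • Tw (Fin.revPerm * σ * Fin.revPerm) (iot n autK f) := by
    have := Equiv.sum_comp ((Equiv.mulLeft Fin.revPerm).trans (Equiv.mulRight Fin.revPerm))
      (fun σ : Equiv.Perm (Fin n) => a ^ inversions σ • Tw σ (iot n autK f))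
    simp only [Equiv.trans_apply, Equiv.coe_mulLeft, Equiv.coe_mulRight, inv_conj] at this
    rw [this]
    simp [Ua, LinearMap.sum_apply]
  rw [s1, map_sum, map_sum]
  have s2 : ∀ σ : Equiv.Perm (Fin n), Tw Fin.revPerm (iot n autK
      (a ^ inversions σ • Tw (Fin.revPerm * σ * Fin.revPerm) (iot n autK f))) =
      (a ^ (n * (n - 1) / 2))⁻¹ • (a ^ inversions (Fin.revPerm * σ) • Tw (Fin.revPerm * σ) f) := by
    intro σ
    rw [iot_smul, map_smul, Tw_iot T hT Tw hTw autK hat hi, smul_smul, map_pow, haa, ← inv_rev σ]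
    congr 1
    rw [pow_add]
    have h1 : a ^ inversions σ ≠ 0 := pow_ne_zero _ ha0
    have h2 : a ^ inversions (Fin.revPerm * σ) ≠ 0 := pow_ne_zero _ ha0
    rw [inv_pow]
    field_simp
  simp only [s2]
  have := Equiv.sum_comp (Equiv.mulLeft Fin.revPerm)
      (fun σ => a ^ inversions σ • Tw σ f)
  simp only [Equiv.coe_mulLeft] at this
  rw [← smul_sum, this]
  simp [Ua, LinearMap.sum_apply]

end Stmt6

open Stmt6

theorem stmt_6 (n : ℕ)
    (T : ℕ → P n →ₗ[K] P n) (hT : IsDL n t T)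
    (Tw : Equiv.Perm (Fin n) → P n →ₗ[K] P n) (hTw : IsTsigma n T Tw)
    -- the field automorphism of K = ℚ(q,t) with q ↦ q⁻¹ and t ↦ t⁻¹
    (autK : K →+* K) (haq : autK q = q⁻¹) (hat : autK t = t⁻¹)
    (f : P n) :
    rename Fin.rev (MvPolynomial.map autK
        (Uplus n Tw (rename Fin.rev (MvPolynomial.map autK f)))) =
      C ((t ^ (n * (n - 1) / 2))⁻¹) * Uplus n Tw f ∧
    rename Fin.rev (MvPolynomial.map autK
        (Uminus n t Tw (rename Fin.rev (MvPolynomial.map autK f)))) =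
      C (t ^ (n * (n - 1) / 2)) * Uminus n t Tw f := by
  have hi := aut_aut autK haq hat
  have ht := t_ne_zero
  have hp : Uplus n Tw = Ua n 1 Tw := by simp [Uplus, Ua]
  have hm : Uminus n t Tw = Ua n (-t)⁻¹ Tw := by simp only [Uminus, Ua, inv_pow]
  have h1 := iot_Ua T hT Tw hTw autK hat hi (a := 1) (by ring) one_ne_zero (by simp) f
  have h2 := iot_Ua T hT Tw hTw autK hat hi (a := (-t)⁻¹) (by field_simp; ring)
    (inv_ne_zero (neg_ne_zero.mpr ht)) (by rw [map_inv₀, map_neg, hat, ← inv_neg]) f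
  rw [hp, hm]
  constructor
  · rw [← iot_apply, ← iot_apply, h1, smul_eq_C_mul, one_mul, one_mul]
  · have e : (-t)⁻¹ * (-t)⁻¹ * t = t⁻¹ := by field_simp
    rw [← iot_apply, ← iot_apply, h2, smul_eq_C_mul, e, inv_pow, inv_inv]
end
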